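/- arXiv:2601.13906 — 3 statements merged into one kernel-verified Lean document; each statement's English description precedes it below -/
import Mathlib

section
/- Let 𝒫 be a set of r-patterns such that for every k ≥ 1, any two distinct 𝒫-cliques of size k whose edges partition [rk] have distinct traces. Then there exists a constant C > 0 such that the probability that z_𝒫(RM_n^(r)) ≤ C·n^(1/r) tends to 1 as n → ∞. -/
open Finset
open scoped Classical

/-- An ordered `r`-matching of size `n`: a partition of `[r*n] = {1,…,r*n}` into `n`
pairwise disjoint `r`-element subsets (the edges). -/
def IsOrderedMatching (r n : ℕ) (M : Finset (Finset ℕ)) : Prop :=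
  M.card = n ∧ (∀ e ∈ M, e.card = r) ∧
  (∀ e ∈ M, ∀ f ∈ M, e ≠ f → Disjoint e f) ∧
  M.biUnion id = Finset.Icc 1 (r * n)

/-- Two disjoint `r`-element sets `e`, `f` form the `r`-pattern `P`: the unique
order-preserving bijection from `e ∪ f` onto `[2r]` maps the pair `{e, f}` onto `P`. -/
def FormsPattern (r : ℕ) (e f : Finset ℕ) (P : Finset (Finset ℕ)) : Prop :=
  ∃ φ : ℕ → ℕ, StrictMonoOn φ ↑(e ∪ f) ∧
    (e ∪ f).image φ = Finset.Icc 1 (2 * r) ∧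
    ({e.image φ, f.image φ} : Finset (Finset ℕ)) = P

/-- A `Ps`-clique: a family of pairwise disjoint `r`-element subsets of `ℕ`, every two of
which form a pattern belonging to `Ps`. -/
def IsClique (r : ℕ) (Ps : Set (Finset (Finset ℕ))) (K : Finset (Finset ℕ)) : Prop :=
  (∀ e ∈ K, e.card = r) ∧ (∀ e ∈ K, ∀ f ∈ K, e ≠ f → Disjoint e f) ∧
  (∀ e ∈ K, ∀ f ∈ K, e ≠ f → ∃ P ∈ Ps, FormsPattern r e f P)

/-- `z_Ps(M)`: the maximum size of a subfamily of `M` that is a `Ps`-clique. -/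
noncomputable def zClique (r : ℕ) (Ps : Set (Finset (Finset ℕ))) (M : Finset (Finset ℕ)) : ℕ :=
  sSup {k | ∃ K : Finset (Finset ℕ), K ⊆ M ∧ IsClique r Ps K ∧ K.card = k}

/-- All ordered `r`-matchings of size `n` (as a finset). -/
noncomputable def matchingFamilies (r n : ℕ) : Finset (Finset (Finset ℕ)) :=
  ((Finset.Icc 1 (r * n)).powerset.powerset).filter (IsOrderedMatching r n)

/-- The probability of the event `A` for a uniformly random ordered `r`-matching of size `n`. -/
noncomputable def prob (r n : ℕ) (A : Finset (Finset ℕ) → Prop) : ℝ :=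
  (((matchingFamilies r n).filter A).card : ℝ) / ((matchingFamilies r n).card : ℝ)

/-- Expectation of `X` with respect to a uniformly random ordered `r`-matching of size `n`. -/
noncomputable def expect (r n : ℕ) (X : Finset (Finset ℕ) → ℝ) : ℝ :=
  (∑ M ∈ matchingFamilies r n, X M) / ((matchingFamilies r n).card : ℝ)

/-- An `r`-partite `r`-pattern: each edge contains exactly one of `{2i-1, 2i}` for each
`i = 1, …, r`. -/
def IsPartitePattern (r : ℕ) (P : Finset (Finset ℕ)) : Prop :=
  IsOrderedMatching r 2 P ∧
  ∀ e ∈ P, ∀ i ∈ Finset.Icc 1 r, (e ∩ {2 * i - 1, 2 * i}).card = 1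

/-- An `r`-pattern `P` is collectable if there exist arbitrarily large `{P}`-cliques. -/
def Collectable (r : ℕ) (P : Finset (Finset ℕ)) : Prop :=
  ∀ k : ℕ, ∃ K : Finset (Finset ℕ), IsClique r {P} K ∧ K.card = k

/-- The word of a pattern `P` over `{A=true, B=false}`: the `j`-th letter is `true` iff
vertex `j` lies in the edge of `P` containing `1`. -/
noncomputable def patternWord (r : ℕ) (P : Finset (Finset ℕ)) : List Bool :=
  (List.range (2 * r)).map (fun j => decide (∃ e ∈ P, 1 ∈ e ∧ j + 1 ∈ e))

/-- `lam` is a splitting of the word `w` into consecutive blocks of the form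
`A^t B^t` or `B^t A^t` with half-lengths given by `lam`. -/
def IsBlockSplitting (w : List Bool) (lam : List ℕ) : Prop :=
  (∀ t ∈ lam, 1 ≤ t) ∧
  ∃ bs : List Bool, bs.length = lam.length ∧
    w = (List.zipWith (fun t b => List.replicate t b ++ List.replicate t !b) lam bs).flatten

/-- The pattern `P` has composition `lam` (the sequence of half-lengths of the blocks of
its unique splitting). -/
def HasComposition (r : ℕ) (P : Finset (Finset ℕ)) (lam : List ℕ) : Prop :=
  IsBlockSplitting (patternWord r P) lam

/-- Two distinct collectable `r`-patterns are harmonious if they have the same composition. -/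
def Harmonious (r : ℕ) (P Q : Finset (Finset ℕ)) : Prop :=
  P ≠ Q ∧ Collectable r P ∧ Collectable r Q ∧
  ∃ lam : List ℕ, HasComposition r P lam ∧ HasComposition r Q lam

/-- A pair of distinct `r`-patterns is a mismatch if exactly one of them is collectable, or
both are collectable but their compositions differ. -/
def Mismatch (r : ℕ) (P Q : Finset (Finset ℕ)) : Prop :=
  P ≠ Q ∧
  ((Collectable r P ∧ ¬ Collectable r Q) ∨
   (¬ Collectable r P ∧ Collectable r Q) ∨
   (Collectable r P ∧ Collectable r Q ∧
     ¬ ∃ lam : List ℕ, HasComposition r P lam ∧ HasComposition r Q lam))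

/-- The trace of an ordered `r`-matching of size `k` on `[rk]`: the `j`-th letter equals
`i` when `j` is the `i`-th smallest element of the edge containing `j`. -/
noncomputable def trace (r k : ℕ) (M : Finset (Finset ℕ)) : List ℕ :=
  (List.range (r * k)).map (fun j₀ =>
    ((Finset.Icc 1 (r * k)).filter
      (fun x => x ≤ j₀ + 1 ∧ ∃ e ∈ M, j₀ + 1 ∈ e ∧ x ∈ e)).card)

/-- `a_Ps(k)`: the number of `Ps`-cliques of size `k` whose edges partition `[rk]`. -/
noncomputable def cliqueCount (r : ℕ) (Ps : Set (Finset (Finset ℕ))) (k : ℕ) : ℕ :=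
  (((Finset.Icc 1 (r * k)).powerset.powerset).filter
    (fun M => IsOrderedMatching r k M ∧ IsClique r Ps M)).card

/-- The maximum size of any `Ps`-clique whatsoever. -/
noncomputable def maxCliqueSize (r : ℕ) (Ps : Set (Finset (Finset ℕ))) : ℕ :=
  sSup {k | ∃ K : Finset (Finset ℕ), IsClique r Ps K ∧ K.card = k}

/-- `M` contains a copy of the ordered `r`-matching `H` of size `k`: a subfamily `N ⊆ M` of
`k` edges such that the order-preserving bijection from the union of the edges of `N`
onto `[rk]` maps `N` onto `H`. -/
def ContainsCopy (r k : ℕ) (H M : Finset (Finset ℕ)) : Prop :=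
  ∃ N ⊆ M, N.card = k ∧ ∃ φ : ℕ → ℕ,
    StrictMonoOn φ ↑(N.biUnion id) ∧
    (N.biUnion id).image φ = Finset.Icc 1 (r * k) ∧
    N.image (fun e => e.image φ) = H

/-- Delete the `j`-th smallest element of the finite set `e`. -/
def deleteJth (j : ℕ) (e : Finset ℕ) : Finset ℕ :=
  e.filter (fun x => (e.filter (· ≤ x)).card ≠ j)

/-- Relabel the elements of `e` order-preservingly by their ranks in `V`. -/
def relabel (V : Finset ℕ) (e : Finset ℕ) : Finset ℕ :=
  e.image (fun x => (V.filter (· ≤ x)).card)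

/-- `S^(−j)`: delete from each edge of the pattern `S` its `j`-th smallest element and
relabel the remaining vertices order-preservingly. -/
def patternDelete (j : ℕ) (S : Finset (Finset ℕ)) : Finset (Finset ℕ) :=
  (S.image (deleteJth j)).image (relabel ((S.image (deleteJth j)).biUnion id))


/-- Matchings of a finite vertex set `V` into `r`-sets. -/
noncomputable def matchOn (r : ℕ) (V : Finset ℕ) : Finset (Finset (Finset ℕ)) :=
  V.powerset.powerset.filter (fun M => (∀ e ∈ M, e.card = r) ∧
    (∀ e ∈ M, ∀ f ∈ M, e ≠ f → Disjoint e f) ∧ M.biUnion id = V)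

lemma mem_matchOn {r : ℕ} {V : Finset ℕ} {M : Finset (Finset ℕ)} :
    M ∈ matchOn r V ↔ (∀ e ∈ M, e.card = r) ∧
    (∀ e ∈ M, ∀ f ∈ M, e ≠ f → Disjoint e f) ∧ M.biUnion id = V := by
  unfold matchOn
  rw [Finset.mem_filter]
  constructor
  · exact fun h => h.2
  · intro h
    refine ⟨?_, h⟩
    rw [Finset.mem_powerset]
    intro e he
    rw [Finset.mem_powerset, ← h.2.2]
    exact Finset.subset_biUnion_of_mem id he

lemma card_union_of_disj {r : ℕ} {M : Finset (Finset ℕ)} (h1 : ∀ e ∈ M, e.card = r)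
    (h2 : ∀ e ∈ M, ∀ f ∈ M, e ≠ f → Disjoint e f) : (M.biUnion id).card = r * M.card := by
  rw [Finset.card_biUnion (t := id) (fun e he f hf hef => h2 e he f hf hef)]
  simp only [id]
  rw [Finset.sum_congr rfl h1, Finset.sum_const, smul_eq_mul, mul_comm]

lemma matchOn_card {r n : ℕ} (hr : 2 ≤ r) {V : Finset ℕ} (hV : V.card = r * n)
    {M : Finset (Finset ℕ)} (hM : M ∈ matchOn r V) : M.card = n := by
  rw [mem_matchOn] at hM
  have := card_union_of_disj hM.1 hM.2.1
  rw [hM.2.2, hV] at this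
  exact (Nat.eq_of_mul_eq_mul_left (by omega) this).symm

lemma matchingFamilies_eq {r n : ℕ} (hr : 2 ≤ r) :
    matchingFamilies r n = matchOn r (Finset.Icc 1 (r * n)) := by
  ext M
  have hV : (Finset.Icc 1 (r * n)).card = r * n := by simp
  constructor
  · intro h
    unfold matchingFamilies at h
    rw [Finset.mem_filter] at h
    exact mem_matchOn.2 h.2.2
  · intro h
    have hc := matchOn_card hr hV h
    have h' := h
    unfold matchOn at h'
    rw [Finset.mem_filter] at h'
    unfold matchingFamilies
    rw [Finset.mem_filter]
    exact ⟨h'.1, hc, h'.2⟩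

/-- Matchings of `V` containing `K` inject into matchings of the rest. -/
lemma card_contain_le {r : ℕ} {V : Finset ℕ} (K : Finset (Finset ℕ)) :
    ((matchOn r V).filter (fun M => K ⊆ M)).card ≤ (matchOn r (V \ K.biUnion id)).card := by
  apply Finset.card_le_card_of_injOn (fun M => M \ K)
  · intro M hM
    rw [Finset.mem_coe, Finset.mem_filter, mem_matchOn] at hM
    obtain ⟨⟨h1, h2, h3⟩, hK⟩ := hM
    rw [Finset.mem_coe, mem_matchOn]
    refine ⟨fun e he => h1 e (Finset.mem_sdiff.1 he).1, fun e he f hf => h2 e (Finset.mem_sdiff.1 he).1 f (Finset.mem_sdiff.1 hf).1, ?_⟩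
    ext x
    simp only [Finset.mem_biUnion, Finset.mem_sdiff, id, ← h3]
    constructor
    · rintro ⟨e, ⟨he, heK⟩, hx⟩
      refine ⟨⟨e, he, hx⟩, ?_⟩
      rintro ⟨f, hf, hxf⟩
      have hne : e ≠ f := by rintro rfl; exact heK hf
      exact Finset.disjoint_left.1 (h2 e he f (hK hf) hne) hx hxf
    · rintro ⟨⟨e, he, hx⟩, hn⟩
      exact ⟨e, ⟨he, fun h => hn ⟨e, h, hx⟩⟩, hx⟩
  · intro M hM N hN h
    simp only [Finset.coe_filter, Set.mem_ofPred_eq] at hM hN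
    rw [← Finset.sdiff_union_of_subset hM.2, ← Finset.sdiff_union_of_subset hN.2]
    simp only at h
    rw [h]

lemma card_contain_single {r : ℕ} {V e : Finset ℕ} (hr : 2 ≤ r) (he : e ∈ V.powersetCard r) :
    ((matchOn r V).filter (fun M => e ∈ M)).card = (matchOn r (V \ e)).card := by
  rw [Finset.mem_powersetCard] at he
  apply le_antisymm
  · simpa using card_contain_le (r := r) (V := V) {e}
  · have hnot : ∀ M ∈ matchOn r (V \ e), e ∉ M := by
      intro M hM heM
      rw [mem_matchOn] at hM
      obtain ⟨x, hx⟩ : e.Nonempty := by rw [← Finset.card_pos]; omega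
      have : x ∈ M.biUnion id := Finset.mem_biUnion.2 ⟨e, heM, hx⟩
      rw [hM.2.2, Finset.mem_sdiff] at this
      exact this.2 hx
    apply Finset.card_le_card_of_injOn (fun M => insert e M)
    · intro M hM
      have hM' := mem_matchOn.1 (Finset.mem_coe.1 hM)
      obtain ⟨h1, h2, h3⟩ := hM'
      have hd : ∀ f ∈ M, Disjoint e f := by
        intro f hf
        rw [Finset.disjoint_left]
        intro x hx hxf
        have : x ∈ M.biUnion id := Finset.mem_biUnion.2 ⟨f, hf, hxf⟩
        rw [h3, Finset.mem_sdiff] at this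
        exact this.2 hx
      rw [Finset.mem_coe, Finset.mem_filter, mem_matchOn]
      refine ⟨⟨?_, ?_, ?_⟩, Finset.mem_insert_self _ _⟩
      · intro f hf
        rcases Finset.mem_insert.1 hf with rfl | hf
        · exact he.2
        · exact h1 f hf
      · intro f hf g hg hfg
        rcases Finset.mem_insert.1 hf with hfe | hf <;> rcases Finset.mem_insert.1 hg with hge | hg
        · exact absurd (hfe.trans hge.symm) hfg
        · rw [hfe]; exact hd g hg
        · rw [hge]; exact (hd f hf).symm
        · exact h2 f hf g hg hfg
      · rw [Finset.biUnion_insert, h3]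
        exact Finset.union_sdiff_of_subset he.1
    · intro M hM N hN h
      have := congrArg (fun S => Finset.erase S e) h
      simpa [Finset.erase_insert (hnot M hM), Finset.erase_insert (hnot N hN)] using this

lemma matchOn_count {r : ℕ} (hr : 2 ≤ r) (n : ℕ) : ∀ V : Finset ℕ, V.card = r * n →
    (matchOn r V).card * (r.factorial ^ n * n.factorial) = (r * n).factorial := by
  induction n with
  | zero =>
    intro V hV
    have hV0 : V = ∅ := by simpa using hV
    subst hV0
    have : matchOn r ∅ = {∅} := by
      ext M
      rw [mem_matchOn, Finset.mem_singleton]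
      constructor
      · intro h
        have := matchOn_card (n := 0) hr (by simp) (mem_matchOn.2 h)
        simpa using this
      · rintro rfl; simp
    simp [this]
  | succ n ih =>
    intro V hV
    have key : (n + 1) * (matchOn r V).card =
        ∑ e ∈ V.powersetCard r, (matchOn r (V \ e)).card := by
      rw [← Finset.sum_congr rfl (fun e he => card_contain_single (r := r) (V := V) hr he)]
      have := Finset.sum_card_bipartiteAbove_eq_sum_card_bipartiteBelow
        (s := matchOn r V) (t := V.powersetCard r) (fun M e => e ∈ M)
      simp only [Finset.bipartiteBelow, Finset.bipartiteAbove] at this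
      rw [← this, mul_comm, ← smul_eq_mul, ← Finset.sum_const]
      apply Finset.sum_congr rfl
      intro M hM
      rw [← matchOn_card hr hV hM]
      congr 1
      rw [mem_matchOn] at hM
      ext e
      rw [Finset.mem_filter, Finset.mem_powersetCard]
      refine ⟨fun h => ⟨⟨?_, hM.1 e h⟩, h⟩, fun h => h.2⟩
      rw [← hM.2.2]
      exact Finset.subset_biUnion_of_mem id h
    have h2 : (∑ e ∈ V.powersetCard r, (matchOn r (V \ e)).card) *
        (r.factorial ^ n * n.factorial) = (r * (n + 1)).choose r * (r * n).factorial := by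
      rw [Finset.sum_mul, Finset.sum_congr rfl (g := fun _ => (r * n).factorial),
        Finset.sum_const, Finset.card_powersetCard, hV, smul_eq_mul]
      intro e he
      rw [Finset.mem_powersetCard] at he
      apply ih
      rw [Finset.card_sdiff_of_subset he.1, hV, he.2, mul_add, mul_one, Nat.add_sub_cancel]
    have h3 := Nat.choose_mul_factorial_mul_factorial (n := r * (n + 1)) (k := r)
      (Nat.le_mul_of_pos_right r (by omega))
    have h4 : r * (n + 1) - r = r * n := by rw [mul_add, mul_one, Nat.add_sub_cancel]
    rw [h4] at h3
    rw [← h3, pow_succ, Nat.factorial_succ]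
    calc _ = ((n + 1) * (matchOn r V).card) * (r.factorial ^ n * n.factorial) * r.factorial := by ring
      _ = _ := by rw [key, h2]; ring

/-- Rank of `x` in `U`. -/
def rankIn (U : Finset ℕ) (x : ℕ) : ℕ := (U.filter (· ≤ x)).card

lemma rankIn_strictMonoOn (U : Finset ℕ) : StrictMonoOn (rankIn U) ↑U := by
  intro x _ y hy hxy
  apply Finset.card_lt_card
  rw [Finset.ssubset_iff_of_subset]
  · exact ⟨y, by simp only [Finset.mem_filter]; exact ⟨hy, le_rfl⟩, by simp [hxy]⟩
  · intro z hz
    rw [Finset.mem_filter] at hz ⊢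
    exact ⟨hz.1, hz.2.trans hxy.le⟩

lemma rankIn_image (U : Finset ℕ) : U.image (rankIn U) = Finset.Icc 1 U.card := by
  apply Finset.eq_of_subset_of_card_le
  · intro y hy
    obtain ⟨x, hx, rfl⟩ := Finset.mem_image.1 hy
    rw [Finset.mem_Icc]
    refine ⟨Finset.card_pos.2 ⟨x, by simp [hx]⟩, Finset.card_filter_le _ _⟩
  · rw [Finset.card_image_of_injOn (rankIn_strictMonoOn U).injOn]
    simp

lemma formsPattern_image {r : ℕ} {e f U : Finset ℕ} {P : Finset (Finset ℕ)} {φ : ℕ → ℕ}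
    (hφ : StrictMonoOn φ ↑U) (he : e ⊆ U) (hf : f ⊆ U) (h : FormsPattern r e f P) :
    FormsPattern r (e.image φ) (f.image φ) P := by
  obtain ⟨ψ, h1, h2, h3⟩ := h
  have hinv : ∀ x ∈ U, Function.invFunOn φ ↑U (φ x) = x := fun x hx =>
    hφ.injOn.leftInvOn_invFunOn (Finset.mem_coe.2 hx)
  have himg : ∀ s ⊆ U, (s.image φ).image (ψ ∘ Function.invFunOn φ ↑U) = s.image ψ := by
    intro s hs
    rw [Finset.image_image]
    apply Finset.image_congr
    intro x hx
    simp [hinv x (hs hx)]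
  refine ⟨ψ ∘ Function.invFunOn φ ↑U, ?_, ?_, ?_⟩
  · rw [← Finset.image_union]
    intro a ha b hb hab
    obtain ⟨x, hx, rfl⟩ := Finset.mem_image.1 (Finset.mem_coe.1 ha)
    obtain ⟨y, hy, rfl⟩ := Finset.mem_image.1 (Finset.mem_coe.1 hb)
    have hxU := Finset.union_subset he hf hx
    have hyU := Finset.union_subset he hf hy
    simp only [Function.comp, hinv x hxU, hinv y hyU]
    exact h1 hx hy ((hφ.lt_iff_lt hxU hyU).1 hab)
  · rw [← Finset.image_union, himg _ (Finset.union_subset he hf), h2]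
  · rw [himg e he, himg f hf, h3]

lemma isClique_mono {r : ℕ} {Ps : Set (Finset (Finset ℕ))} {K L : Finset (Finset ℕ)}
    (h : IsClique r Ps K) (hL : L ⊆ K) : IsClique r Ps L :=
  ⟨fun e he => h.1 e (hL he), fun e he f hf => h.2.1 e (hL he) f (hL hf),
    fun e he f hf => h.2.2 e (hL he) f (hL hf)⟩

/-- Standardization of a family of sets with union `U`. -/
noncomputable def stdize (U : Finset ℕ) (K : Finset (Finset ℕ)) : Finset (Finset ℕ) :=
  K.image (fun e => e.image (rankIn U))

lemma image_rank_injOn (U : Finset ℕ) :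
    Set.InjOn (fun e : Finset ℕ => e.image (rankIn U)) {e | e ⊆ U} := by
  intro e he f hf h
  have hinj := (rankIn_strictMonoOn U).injOn
  simp only at h
  ext x
  constructor
  · intro hx
    have : rankIn U x ∈ f.image (rankIn U) := h ▸ Finset.mem_image_of_mem _ hx
    obtain ⟨y, hy, hxy⟩ := Finset.mem_image.1 this
    rwa [← hinj (hf hy) (he hx) hxy]
  · intro hx
    have : rankIn U x ∈ e.image (rankIn U) := h ▸ Finset.mem_image_of_mem _ hx
    obtain ⟨y, hy, hxy⟩ := Finset.mem_image.1 this
    rwa [← hinj (he hy) (hf hx) hxy]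

lemma stdize_spec {r : ℕ} {Ps : Set (Finset (Finset ℕ))} {K : Finset (Finset ℕ)}
    {U : Finset ℕ} (h : IsClique r Ps K) (hU : K.biUnion id = U) :
    IsOrderedMatching r K.card (stdize U K) ∧ IsClique r Ps (stdize U K) := by
  have hsub : ∀ e ∈ K, e ⊆ U := fun e he => hU ▸ Finset.subset_biUnion_of_mem id he
  have hm := rankIn_strictMonoOn U
  have hcard : ∀ e ∈ stdize U K, e.card = r := by
    intro e he
    obtain ⟨e, he', rfl⟩ := Finset.mem_image.1 he
    replace he := he'
    rw [Finset.card_image_of_injOn (hm.injOn.mono (hsub e he)), h.1 e he]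
  have hdis : ∀ e ∈ stdize U K, ∀ f ∈ stdize U K, e ≠ f → Disjoint e f := by
    intro e he f hf hne
    obtain ⟨e, he', rfl⟩ := Finset.mem_image.1 he
    replace he := he'
    obtain ⟨f, hf', rfl⟩ := Finset.mem_image.1 hf
    replace hf := hf'
    have hef : e ≠ f := by rintro rfl; exact hne rfl
    rw [Finset.disjoint_left]
    intro a ha hb
    obtain ⟨x, hx, rfl⟩ := Finset.mem_image.1 ha
    obtain ⟨y, hy, hxy⟩ := Finset.mem_image.1 hb
    have := hm.injOn (hsub f hf hy) (hsub e he hx) hxy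
    subst this
    exact Finset.disjoint_left.1 (h.2.1 e he f hf hef) hx hy
  refine ⟨⟨?_, hcard, hdis, ?_⟩, hcard, hdis, ?_⟩
  · exact Finset.card_image_of_injOn ((image_rank_injOn U).mono (fun e he => hsub e he))
  · rw [← card_union_of_disj h.1 h.2.1, hU, ← rankIn_image U]
    ext y
    simp only [stdize, Finset.mem_biUnion, Finset.mem_image, id, ← hU]
    constructor
    · rintro ⟨_, ⟨e, he, rfl⟩, hy⟩
      obtain ⟨x, hx, rfl⟩ := Finset.mem_image.1 hy
      exact ⟨x, ⟨e, he, hx⟩, rfl⟩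
    · rintro ⟨x, ⟨e, he, hx⟩, rfl⟩
      exact ⟨_, ⟨e, he, rfl⟩, Finset.mem_image_of_mem _ hx⟩
  · intro e he f hf hne
    obtain ⟨e, he', rfl⟩ := Finset.mem_image.1 he
    replace he := he'
    obtain ⟨f, hf', rfl⟩ := Finset.mem_image.1 hf
    replace hf := hf'
    have hef : e ≠ f := by rintro rfl; exact hne rfl
    obtain ⟨P, hP, hF⟩ := h.2.2 e he f hf hef
    exact ⟨P, hP, formsPattern_image hm (hsub e he) (hsub f hf) hF⟩

/-- Cliques of size `k` with vertex set `U`. -/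
noncomputable def cliquesOn (r : ℕ) (Ps : Set (Finset (Finset ℕ))) (k : ℕ) (U : Finset ℕ) :
    Finset (Finset (Finset ℕ)) :=
  U.powerset.powerset.filter (fun K => IsClique r Ps K ∧ K.card = k ∧ K.biUnion id = U)

lemma trace_le {r k : ℕ} {M : Finset (Finset ℕ)} (hM : IsOrderedMatching r k M) (j : ℕ) :
    ((Finset.Icc 1 (r * k)).filter
      (fun x => x ≤ j + 1 ∧ ∃ e ∈ M, j + 1 ∈ e ∧ x ∈ e)).card ≤ r := by
  by_cases h : ∃ e ∈ M, j + 1 ∈ e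
  · obtain ⟨e, he, hj⟩ := h
    rw [← hM.2.1 e he]
    apply Finset.card_le_card
    intro x hx
    obtain ⟨_, _, f, hf, hjf, hxf⟩ := Finset.mem_filter.1 hx
    by_cases hef : e = f
    · rwa [hef]
    · exact absurd hjf (Finset.disjoint_left.1 (hM.2.2.1 e he f hf hef) hj)
  · have : ((Finset.Icc 1 (r * k)).filter
      (fun x => x ≤ j + 1 ∧ ∃ e ∈ M, j + 1 ∈ e ∧ x ∈ e)) = ∅ := by
      rw [Finset.filter_eq_empty_iff]
      rintro x _ ⟨_, e, he, hj, _⟩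
      exact h ⟨e, he, hj⟩
    simp [this]

lemma cliquesOn_card_le {r : ℕ} {Ps : Set (Finset (Finset ℕ))}
    (hrec : ∀ k : ℕ, 1 ≤ k → ∀ M N : Finset (Finset ℕ),
      IsOrderedMatching r k M → IsOrderedMatching r k N →
      IsClique r Ps M → IsClique r Ps N → M ≠ N → trace r k M ≠ trace r k N)
    {k : ℕ} (hk : 1 ≤ k) (U : Finset ℕ) :
    (cliquesOn r Ps k U).card ≤ (r + 1) ^ (r * k) := by
  have hc : (Fintype.piFinset (fun _ : Fin (r * k) => Finset.range (r + 1))).card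
      = (r + 1) ^ (r * k) := by simp
  rw [← hc]
  have hspec : ∀ K ∈ cliquesOn r Ps k U,
      IsOrderedMatching r k (stdize U K) ∧ IsClique r Ps (stdize U K) := by
    intro K hK
    obtain ⟨_, h1, h2, h3⟩ := Finset.mem_filter.1 hK
    have := stdize_spec h1 h3
    rwa [h2] at this
  apply Finset.card_le_card_of_injOn (fun K => fun j : Fin (r * k) =>
    ((Finset.Icc 1 (r * k)).filter
      (fun x => x ≤ (j : ℕ) + 1 ∧ ∃ e ∈ stdize U K, (j : ℕ) + 1 ∈ e ∧ x ∈ e)).card)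
  · intro K hK
    rw [Finset.mem_coe, Fintype.mem_piFinset]
    intro j
    rw [Finset.mem_range, Nat.lt_succ_iff]
    exact trace_le (hspec K hK).1 j
  · intro K hK L hL h
    have hKL : stdize U K = stdize U L := by
      by_contra hne
      apply hrec k hk _ _ (hspec K hK).1 (hspec L hL).1 (hspec K hK).2 (hspec L hL).2 hne
      unfold trace
      apply List.map_congr_left
      intro j hj
      exact congrFun h ⟨j, List.mem_range.1 hj⟩
    have hs : ∀ K ∈ cliquesOn r Ps k U, ∀ e ∈ K, e ⊆ U := by
      intro K hK e he
      have := (Finset.mem_filter.1 hK).1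
      exact Finset.mem_powerset.1 (Finset.mem_powerset.1 this he)
    have hi := image_rank_injOn U
    ext e
    unfold stdize at hKL
    constructor
    · intro he
      have : e.image (rankIn U) ∈ L.image (fun e => e.image (rankIn U)) :=
        hKL ▸ Finset.mem_image_of_mem (fun e => e.image (rankIn U)) he
      obtain ⟨f, hf, hfe⟩ := Finset.mem_image.1 this
      rwa [← hi (hs L hL f hf) (hs K hK e he) hfe]
    · intro he
      have : e.image (rankIn U) ∈ K.image (fun e => e.image (rankIn U)) :=
        hKL ▸ Finset.mem_image_of_mem (fun e => e.image (rankIn U)) he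
      obtain ⟨f, hf, hfe⟩ := Finset.mem_image.1 this
      rwa [← hi (hs K hK f hf) (hs L hL e he) hfe]

/-- Matchings containing a clique of size `k`. -/
noncomputable def badSet (r : ℕ) (Ps : Set (Finset (Finset ℕ))) (n k : ℕ) :
    Finset (Finset (Finset ℕ)) :=
  (matchingFamilies r n).filter (fun M => ∃ K ⊆ M, IsClique r Ps K ∧ K.card = k)

lemma badSet_le {r : ℕ} (hr : 2 ≤ r) {Ps : Set (Finset (Finset ℕ))}
    (hrec : ∀ k : ℕ, 1 ≤ k → ∀ M N : Finset (Finset ℕ),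
      IsOrderedMatching r k M → IsOrderedMatching r k N →
      IsClique r Ps M → IsClique r Ps N → M ≠ N → trace r k M ≠ trace r k N)
    {n k : ℕ} (hk : 1 ≤ k) :
    (badSet r Ps n k).card * (r * k).factorial ≤
      ((r + 1) ^ r * r.factorial * n) ^ k * (matchingFamilies r n).card := by
  by_cases hkn : k ≤ n
  swap
  · have : badSet r Ps n k = ∅ := by
      unfold badSet
      rw [Finset.filter_eq_empty_iff]
      rintro M hM ⟨K, hKM, -, hK⟩
      have h1 := (Finset.mem_filter.1 hM).2.1
      have := Finset.card_le_card hKM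
      omega
    simp [this]
  obtain ⟨m, rfl⟩ := Nat.exists_eq_add_of_le' hkn
  set V := Finset.Icc 1 (r * (m + k)) with hVdef
  have hV : V.card = r * (m + k) := by simp [hVdef]
  have hcount := matchOn_count hr (m + k) V hV
  unfold badSet
  rw [matchingFamilies_eq hr, ← hVdef]
  set D := r.factorial ^ m * m.factorial with hD
  have hDpos : 0 < D := by positivity
  -- union bound
  have h1 : ((matchOn r V).filter (fun M => ∃ K ⊆ M, IsClique r Ps K ∧ K.card = k)).card ≤
      ∑ U ∈ V.powersetCard (r * k), ∑ K ∈ cliquesOn r Ps k U,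
        ((matchOn r V).filter (fun M => K ⊆ M)).card := by
    calc _ ≤ ((V.powersetCard (r * k)).biUnion (fun U => (cliquesOn r Ps k U).biUnion
        (fun K => (matchOn r V).filter (fun M => K ⊆ M)))).card := by
          apply Finset.card_le_card
          intro M hM
          obtain ⟨hM, K, hKM, hK, hKk⟩ := Finset.mem_filter.1 hM
          have hsub : K.biUnion id ⊆ V := by
            rw [← (mem_matchOn.1 hM).2.2]
            exact Finset.biUnion_subset_biUnion_of_subset_left _ hKM
          rw [Finset.mem_biUnion]
          refine ⟨K.biUnion id, ?_, ?_⟩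
          · rw [Finset.mem_powersetCard, card_union_of_disj hK.1 hK.2.1, hKk]
            exact ⟨hsub, rfl⟩
          · rw [Finset.mem_biUnion]
            refine ⟨K, ?_, Finset.mem_filter.2 ⟨hM, hKM⟩⟩
            unfold cliquesOn
            rw [Finset.mem_filter]
            refine ⟨?_, hK, hKk, rfl⟩
            rw [Finset.mem_powerset]
            intro e he
            rw [Finset.mem_powerset]
            exact Finset.subset_biUnion_of_mem id he
      _ ≤ _ := by
          refine Finset.card_biUnion_le.trans ?_
          apply Finset.sum_le_sum
          intro U _
          exact Finset.card_biUnion_le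
  have h2 : (∑ U ∈ V.powersetCard (r * k), ∑ K ∈ cliquesOn r Ps k U,
        ((matchOn r V).filter (fun M => K ⊆ M)).card) * D ≤
      (r * (m + k)).choose (r * k) * ((r + 1) ^ (r * k) * (r * m).factorial) := by
    rw [Finset.sum_mul, ← hV, ← Finset.card_powersetCard, ← smul_eq_mul]
    apply Finset.sum_le_card_nsmul
    intro U hU
    rw [Finset.mem_powersetCard] at hU
    rw [Finset.sum_mul]
    refine le_trans (b := (cliquesOn r Ps k U).card • (r * m).factorial) ?_ ?_
    · apply Finset.sum_le_card_nsmul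
      intro K hK
      have hKU := (Finset.mem_filter.1 hK).2.2.2
      have := matchOn_count hr m (V \ U) (by
        rw [Finset.card_sdiff_of_subset hU.1, hV, hU.2, smul_eq_mul, mul_add, Nat.add_sub_cancel])
      rw [← this, ← hKU]
      exact Nat.mul_le_mul_right _ (card_contain_le K)
    · rw [smul_eq_mul]
      exact Nat.mul_le_mul_right _ (cliquesOn_card_le hrec hk U)
  have h3 := Nat.choose_mul_factorial_mul_factorial (n := r * (m + k)) (k := r * k)
      (Nat.mul_le_mul_left r (by omega))
  have h4 : r * (m + k) - r * k = r * m := by rw [mul_add, Nat.add_sub_cancel]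
  rw [h4] at h3
  have h5 : (m + k).factorial ≤ m.factorial * (m + k) ^ k := by
    have := Nat.factorial_mul_descFactorial hkn
    rw [Nat.add_sub_cancel] at this
    rw [← this]
    exact Nat.mul_le_mul_left _ (Nat.descFactorial_le_pow _ _)
  refine Nat.le_of_mul_le_mul_right ?_ hDpos
  calc _ ≤ (∑ U ∈ V.powersetCard (r * k), ∑ K ∈ cliquesOn r Ps k U,
        ((matchOn r V).filter (fun M => K ⊆ M)).card) * (r * k).factorial * D := by gcongr
    _ = ((∑ U ∈ V.powersetCard (r * k), ∑ K ∈ cliquesOn r Ps k U,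
        ((matchOn r V).filter (fun M => K ⊆ M)).card) * D) * (r * k).factorial := by ring
    _ ≤ ((r * (m + k)).choose (r * k) * ((r + 1) ^ (r * k) * (r * m).factorial)) *
          (r * k).factorial := Nat.mul_le_mul_right _ h2
    _ = (r + 1) ^ (r * k) * (r * (m + k)).factorial := by rw [← h3]; ring
    _ = (r + 1) ^ (r * k) * ((matchOn r V).card *
          (r.factorial ^ (m + k) * (m + k).factorial)) := by rw [hcount]
    _ ≤ (r + 1) ^ (r * k) * ((matchOn r V).card *
          (r.factorial ^ (m + k) * (m.factorial * (m + k) ^ k))) := by gcongr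
    _ = _ := by rw [hD, mul_pow, mul_pow, ← pow_mul, pow_add]; ring

lemma exists_clique_of_lt {r : ℕ} {Ps : Set (Finset (Finset ℕ))} {M : Finset (Finset ℕ)}
    {k : ℕ} (h : k ≤ zClique r Ps M) : ∃ K ⊆ M, IsClique r Ps K ∧ K.card = k := by
  have hmem : zClique r Ps M ∈
      {k | ∃ K : Finset (Finset ℕ), K ⊆ M ∧ IsClique r Ps K ∧ K.card = k} := by
    apply Nat.sSup_mem
    · exact ⟨0, ∅, by simp, by simp [IsClique], rfl⟩
    · refine ⟨M.card, ?_⟩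
      rintro _ ⟨K, hK, -, rfl⟩
      exact Finset.card_le_card hK
  obtain ⟨K, hKM, hK, hc⟩ := hmem
  rw [← hc] at h
  obtain ⟨L, hL, hLc⟩ := Finset.exists_subset_card_eq h
  exact ⟨L, hL.trans hKM, isClique_mono hK hL, hLc⟩

lemma matchingFamilies_pos {r : ℕ} (hr : 2 ≤ r) (n : ℕ) : 0 < (matchingFamilies r n).card := by
  rw [matchingFamilies_eq hr]
  have := matchOn_count hr n (Finset.Icc 1 (r * n)) (by simp)
  apply Nat.pos_of_ne_zero
  intro h
  rw [h, zero_mul] at this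
  exact (Nat.factorial_pos _).ne this

/-- The analytic estimate. -/
lemma analytic_bound {r : ℕ} (hr : 2 ≤ r) {A C : ℝ} (hA : 1 ≤ A)
    (hC : C = 2 * A * Real.exp r) {n k : ℕ} (hk : 1 ≤ k)
    (hkn : C * (n : ℝ) ^ ((1 : ℝ) / (r : ℝ)) ≤ k) :
    (A * n) ^ k / ((r * k).factorial : ℝ) ≤ (1 / 2) ^ k := by
  have hr0 : (r : ℝ) ≠ 0 := by positivity
  have hr1 : (1 : ℝ) ≤ r := by exact_mod_cast (by omega : 1 ≤ r)
  have he : 1 ≤ Real.exp r := Real.one_le_exp (by positivity)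
  have hC1 : 1 ≤ C := by rw [hC]; nlinarith
  have hn0 : (0 : ℝ) ≤ n := by positivity
  have hpow : C * n ≤ (k : ℝ) ^ r := by
    calc C * n ≤ C ^ r * n := by
          gcongr
          exact le_self_pow₀ hC1 (by omega)
      _ = (C * (n : ℝ) ^ ((1 : ℝ) / (r : ℝ))) ^ r := by
          rw [mul_pow, ← Real.rpow_natCast (_ ^ _), ← Real.rpow_mul hn0, one_div,
            inv_mul_cancel₀ hr0, Real.rpow_one]
      _ ≤ _ := by
          gcongr
  have hfac : ((k : ℝ) ^ r) ^ k ≤ Real.exp r ^ k * ((r * k).factorial : ℝ) := by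
    have h := Real.pow_div_factorial_le_exp (x := (r * k : ℝ)) (by positivity) (r * k)
    rw [div_le_iff₀ (by positivity)] at h
    calc ((k : ℝ) ^ r) ^ k = (k : ℝ) ^ (r * k) := by rw [pow_mul]
      _ ≤ (r * k : ℝ) ^ (r * k) := by
          gcongr
          exact le_mul_of_one_le_left (by positivity) hr1
      _ ≤ _ := h
      _ = _ := by rw [mul_comm (r : ℝ) k, Real.exp_nat_mul]
  rw [div_le_iff₀ (by positivity)]
  have h1 : (C * n) ^ k ≤ Real.exp r ^ k * ((r * k).factorial : ℝ) :=
    (pow_le_pow_left₀ (by positivity) hpow k).trans hfac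
  have h2 : (C * n) ^ k = Real.exp r ^ k * (2 ^ k * (A * n) ^ k) := by
    rw [hC, ← mul_pow, ← mul_pow]; ring
  rw [h2] at h1
  have h3 := le_of_mul_le_mul_left h1 (by positivity)
  rw [one_div, inv_pow, inv_mul_eq_div, le_div_iff₀ (by positivity)]
  linarith

/-- **Observation (reconstructible families).** If distinct `Ps`-cliques of the same size
`k` partitioning `[rk]` always have distinct traces, then a.a.s.
`z_Ps(RM_n^(r)) = O(n^(1/r))`. -/
theorem reconstructible_upper_bound (r : ℕ) (hr : 2 ≤ r) (Ps : Set (Finset (Finset ℕ)))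
    (hPs : ∀ P ∈ Ps, IsOrderedMatching r 2 P)
    (hrec : ∀ k : ℕ, 1 ≤ k → ∀ M N : Finset (Finset ℕ),
      IsOrderedMatching r k M → IsOrderedMatching r k N →
      IsClique r Ps M → IsClique r Ps N → M ≠ N → trace r k M ≠ trace r k N) :
    ∃ C : ℝ, 0 < C ∧
      Filter.Tendsto
        (fun n : ℕ => prob r n (fun M =>
          (zClique r Ps M : ℝ) ≤ C * (n : ℝ) ^ ((1 : ℝ) / (r : ℝ))))
        Filter.atTop (nhds 1) := by
  set A : ℝ := (r + 1) ^ r * r.factorial with hAdef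
  have hA : 1 ≤ A := by
    have h : 1 ≤ (r + 1) ^ r * r.factorial := Nat.succ_le_of_lt (by positivity)
    rw [hAdef]
    exact_mod_cast h
  set C : ℝ := 2 * A * Real.exp r with hC
  have hCpos : 0 < C := by positivity
  refine ⟨C, hCpos, ?_⟩
  have hx : Filter.Tendsto (fun n : ℕ => C * (n : ℝ) ^ ((1 : ℝ) / (r : ℝ)))
      Filter.atTop Filter.atTop := by
    apply Filter.Tendsto.const_mul_atTop hCpos
    exact (tendsto_rpow_atTop (by positivity)).comp tendsto_natCast_atTop_atTop
  have hk : Filter.Tendsto (fun n : ℕ => ⌈C * (n : ℝ) ^ ((1 : ℝ) / (r : ℝ))⌉₊)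
      Filter.atTop Filter.atTop := tendsto_nat_ceil_atTop.comp hx
  have hlow : Filter.Tendsto (fun n : ℕ => 1 - ((1 : ℝ) / 2) ^
      ⌈C * (n : ℝ) ^ ((1 : ℝ) / (r : ℝ))⌉₊) Filter.atTop (nhds 1) := by
    have := (tendsto_pow_atTop_nhds_zero_of_lt_one (r := (1 : ℝ) / 2) (by norm_num)
      (by norm_num)).comp hk
    simpa using this.const_sub 1
  refine tendsto_of_tendsto_of_tendsto_of_le_of_le' hlow tendsto_const_nhds ?_ ?_
  · filter_upwards [hk.eventually_ge_atTop 1] with n hn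
    set k := ⌈C * (n : ℝ) ^ ((1 : ℝ) / (r : ℝ))⌉₊ with hkdef
    have hpos : (0 : ℝ) < ((matchingFamilies r n).card : ℝ) := by
      exact_mod_cast matchingFamilies_pos hr n
    have hsplit : (matchingFamilies r n).card ≤
        ((matchingFamilies r n).filter (fun M =>
          (zClique r Ps M : ℝ) ≤ C * (n : ℝ) ^ ((1 : ℝ) / (r : ℝ)))).card +
        (badSet r Ps n k).card := by
      refine le_trans (Finset.card_le_card ?_) (Finset.card_union_le _ _)
      intro M hM
      rw [Finset.mem_union]
      by_cases h : (zClique r Ps M : ℝ) ≤ C * (n : ℝ) ^ ((1 : ℝ) / (r : ℝ))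
      · exact Or.inl (Finset.mem_filter.2 ⟨hM, h⟩)
      · right
        refine Finset.mem_filter.2 ⟨hM, exists_clique_of_lt ?_⟩
        rw [hkdef]
        exact Nat.ceil_le.2 (not_le.1 h).le
    have hbad := badSet_le hr hrec (n := n) hn
    have han := analytic_bound hr hA hC (n := n) hn (Nat.le_ceil _)
    have hbad' : ((badSet r Ps n k).card : ℝ) * ((r * k).factorial : ℝ) ≤
        (A * n) ^ k * ((matchingFamilies r n).card : ℝ) := by
      rw [hAdef]
      exact_mod_cast hbad
    have hfpos : (0 : ℝ) < ((r * k).factorial : ℝ) := by positivity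
    rw [div_le_iff₀ hfpos] at han
    have hb : ((badSet r Ps n k).card : ℝ) ≤
        (1 / 2) ^ k * ((matchingFamilies r n).card : ℝ) := by
      refine le_of_mul_le_mul_right (hbad'.trans ?_) hfpos
      calc _ ≤ ((1 / 2) ^ k * ((r * k).factorial : ℝ)) * ((matchingFamilies r n).card : ℝ) := by
            gcongr
        _ = _ := by ring
    have hs : ((matchingFamilies r n).card : ℝ) ≤
        (((matchingFamilies r n).filter (fun M =>
          (zClique r Ps M : ℝ) ≤ C * (n : ℝ) ^ ((1 : ℝ) / (r : ℝ)))).card : ℝ) +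
        ((badSet r Ps n k).card : ℝ) := by exact_mod_cast hsplit
    unfold prob
    rw [le_div_iff₀ hpos]
    linarith
  · filter_upwards with n
    unfold prob
    apply div_le_one_of_le₀ _ (by positivity)
    exact_mod_cast Finset.card_filter_le _ _
end

section
/- For every r ≥ 3 and every mismatched pair {P, Q} of distinct r-patterns, there exists j ∈ {1, ..., r} such that {P^(−j), Q^(−j)} is a mismatched pair of distinct (r−1)-patterns, where for an r-pattern S, S^(−j) denotes the (r−1)-pattern obtained by deleting from each of the two edges of S its j-th smallest element and relabeling the remaining 2(r−1) vertices order-preservingly by [2(r−1)]. -/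
open Finset
open scoped Classical

namespace MI

/-- rank of `x` in `e` -/
def rk (e : Finset ℕ) (x : ℕ) : ℕ := (e.filter (· ≤ x)).card

lemma rk_mono (e : Finset ℕ) {x y : ℕ} (h : x ≤ y) : rk e x ≤ rk e y := by
  unfold rk
  apply Finset.card_le_card
  intro z
  simp only [Finset.mem_filter]
  rintro ⟨h1, h2⟩
  exact ⟨h1, h2.trans h⟩

lemma rk_lt {e : Finset ℕ} {x y : ℕ} (h : x < y) (hy : y ∈ e) : rk e x < rk e y := by
  unfold rk
  apply Finset.card_lt_card
  rw [Finset.ssubset_iff_of_subset]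
  · exact ⟨y, by simp [hy], by simp [h]⟩
  · intro z
    simp only [Finset.mem_filter]
    rintro ⟨h1, h2⟩
    exact ⟨h1, h2.trans h.le⟩

lemma rk_le (e : Finset ℕ) (x : ℕ) : rk e x ≤ e.card := Finset.card_filter_le _ _

lemma rk_pos {e : Finset ℕ} {x : ℕ} (hx : x ∈ e) : 1 ≤ rk e x := by
  unfold rk
  rw [Nat.one_le_iff_ne_zero, ← Nat.pos_iff_ne_zero, Finset.card_pos]
  exact ⟨x, by simp [hx]⟩

lemma rk_strictMonoOn (e : Finset ℕ) : StrictMonoOn (rk e) (e : Set ℕ) := by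
  intro x _ y hy h
  exact rk_lt h hy

lemma rk_image (e : Finset ℕ) : e.image (rk e) = Finset.Icc 1 e.card := by
  apply Finset.eq_of_subset_of_card_le
  · intro z hz
    obtain ⟨x, hx, rfl⟩ := Finset.mem_image.1 hz
    exact Finset.mem_Icc.2 ⟨rk_pos hx, rk_le e x⟩
  · rw [Finset.card_image_of_injOn (rk_strictMonoOn e).injOn]
    simp

/-- `a` enumerates `e` increasingly on `1..r`. -/
structure Enum (r : ℕ) (e : Finset ℕ) (a : ℕ → ℕ) : Prop where
  mono : ∀ n m, 1 ≤ n → n < m → m ≤ r → a n < a m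
  mem : ∀ n, 1 ≤ n → n ≤ r → a n ∈ e
  rk_a : ∀ n, 1 ≤ n → n ≤ r → rk e (a n) = n
  surj : ∀ x ∈ e, 1 ≤ rk e x ∧ rk e x ≤ r ∧ a (rk e x) = x

lemma exists_enum (r : ℕ) (e : Finset ℕ) (h : e.card = r) : ∃ a, Enum r e a := by
  have key : ∀ n, 1 ≤ n → n ≤ r → ∃ x ∈ (e : Set ℕ), rk e x = n := by
    intro n h1 h2
    have : n ∈ e.image (rk e) := by
      rw [rk_image]; exact Finset.mem_Icc.2 ⟨h1, by omega⟩
    obtain ⟨x, hx, h⟩ := Finset.mem_image.1 this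
    exact ⟨x, by simpa using hx, h⟩
  refine ⟨Function.invFunOn (rk e) (e : Set ℕ), ?_, ?_, ?_, ?_⟩
  · intro n m h1 h2 h3
    have A := Function.invFunOn_eq (key n h1 (by omega))
    have B := Function.invFunOn_eq (key m (by omega) (by omega))
    by_contra hc
    have := rk_mono e (not_lt.1 hc)
    omega
  · intro n h1 h2
    simpa using Function.invFunOn_mem (key n h1 h2)
  · intro n h1 h2
    exact Function.invFunOn_eq (key n h1 h2)
  · intro x hx
    have h1 := rk_pos hx
    have h2 : rk e x ≤ r := h ▸ rk_le e x
    refine ⟨h1, h2, ?_⟩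
    exact (rk_strictMonoOn e).injOn (Function.invFunOn_mem (key _ h1 h2)) (by simpa using hx)
      (Function.invFunOn_eq (key _ h1 h2))

lemma Enum.le {r : ℕ} {e : Finset ℕ} {a : ℕ → ℕ} (ha : Enum r e a) {n m : ℕ} (h1 : 1 ≤ n)
    (h2 : n ≤ m) (h3 : m ≤ r) : a n ≤ a m := by
  rcases h2.eq_or_lt with h | h
  · rw [h]
  · exact (ha.mono n m h1 h h3).le

lemma Enum.le_rk_iff {r : ℕ} {e : Finset ℕ} {a : ℕ → ℕ} (ha : Enum r e a) {n x : ℕ} (h1 : 1 ≤ n)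
    (h2 : n ≤ r) : n ≤ rk e x ↔ a n ≤ x := by
  constructor
  · intro h
    by_contra hc
    have := rk_lt (not_le.1 hc) (ha.mem n h1 h2)
    rw [ha.rk_a n h1 h2] at this
    omega
  · intro h
    have := rk_mono e h
    rwa [ha.rk_a n h1 h2] at this

/-- The relation of being joined. -/
def J (S : Finset (Finset ℕ)) (i k : ℕ) : Prop :=
  i ≤ k ∧ ∃ e ∈ S, ∃ f ∈ S, ∃ x ∈ e, ∃ y ∈ f, x < y ∧ rk e x = k ∧ rk f y = i

def JTrans (S : Finset (Finset ℕ)) : Prop := ∀ i m k, J S i m → J S m k → J S i k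

lemma J_iff {r : ℕ} {E F : Finset ℕ} {a b : ℕ → ℕ} (ha : Enum r E a) (hb : Enum r F b) (i k : ℕ) :
    J {E, F} i k ↔ 1 ≤ i ∧ i ≤ k ∧ k ≤ r ∧ (a k < b i ∨ b k < a i) := by
  constructor
  · rintro ⟨hik, e, he, f, hf, x, hx, y, hy, hxy, rfl, rfl⟩
    simp only [Finset.mem_insert, Finset.mem_singleton] at he hf
    rcases he with rfl | rfl <;> rcases hf with rfl | rfl
    · have := rk_lt hxy hy; omega
    · have A := ha.surj x hx
      have B := hb.surj y hy
      refine ⟨B.1, hik, A.2.1, Or.inl ?_⟩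
      rw [A.2.2, B.2.2]; exact hxy
    · have A := hb.surj x hx
      have B := ha.surj y hy
      refine ⟨B.1, hik, A.2.1, Or.inr ?_⟩
      rw [A.2.2, B.2.2]; exact hxy
    · have := rk_lt hxy hy; omega
  · rintro ⟨h1, h2, h3, h | h⟩
    · exact ⟨h2, E, by simp, F, by simp, a k, ha.mem _ (by omega) (by omega), b i,
        hb.mem _ (by omega) (by omega), h, ha.rk_a _ (by omega) (by omega),
        hb.rk_a _ (by omega) (by omega)⟩
    · exact ⟨h2, F, by simp, E, by simp, b k, hb.mem _ (by omega) (by omega), a i,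
        ha.mem _ (by omega) (by omega), h, hb.rk_a _ (by omega) (by omega),
        ha.rk_a _ (by omega) (by omega)⟩

lemma rk_image_of_mono {e : Finset ℕ} {φ : ℕ → ℕ} (h : StrictMonoOn φ (e : Set ℕ)) {x : ℕ}
    (hx : x ∈ e) : rk (e.image φ) (φ x) = rk e x := by
  unfold rk
  have : (e.image φ).filter (· ≤ φ x) = (e.filter (· ≤ x)).image φ := by
    ext z
    simp only [Finset.mem_filter, Finset.mem_image]
    constructor
    · rintro ⟨⟨y, hy, rfl⟩, h2⟩
      exact ⟨y, ⟨hy, (h.le_iff_le hy hx).1 h2⟩, rfl⟩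
    · rintro ⟨y, ⟨hy, h2⟩, rfl⟩
      exact ⟨⟨y, hy, rfl⟩, (h.le_iff_le hy hx).2 h2⟩
  rw [this, Finset.card_image_of_injOn]
  exact h.injOn.mono (by intro z; simp +contextual)

lemma J_image {S : Finset (Finset ℕ)} {φ : ℕ → ℕ}
    (h : StrictMonoOn φ ((S.biUnion id : Finset ℕ) : Set ℕ)) (i k : ℕ) :
    J (S.image (fun e => e.image φ)) i k ↔ J S i k := by
  have hU : ∀ e ∈ S, ∀ x ∈ e, x ∈ ((S.biUnion id : Finset ℕ) : Set ℕ) := by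
    intro e he x hx
    simp only [Finset.coe_biUnion, Set.mem_iUnion]
    exact ⟨e, he, hx⟩
  have hm : ∀ e ∈ S, StrictMonoOn φ (e : Set ℕ) := fun e he => h.mono (hU e he)
  unfold J
  refine and_congr_right fun _ => ?_
  constructor
  · rintro ⟨e, he', f, hf', x, hx', y, hy', hxy, h1, h2⟩
    obtain ⟨e, he, rfl⟩ := Finset.mem_image.1 he'
    obtain ⟨f, hf, rfl⟩ := Finset.mem_image.1 hf'
    obtain ⟨x, hx, rfl⟩ := Finset.mem_image.1 hx'
    obtain ⟨y, hy, rfl⟩ := Finset.mem_image.1 hy'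
    rw [rk_image_of_mono (hm _ he) hx] at h1
    rw [rk_image_of_mono (hm _ hf) hy] at h2
    exact ⟨e, he, f, hf, x, hx, y, hy, (h.lt_iff_lt (hU _ he _ hx) (hU _ hf _ hy)).1 hxy, h1, h2⟩
  · rintro ⟨e, he, f, hf, x, hx, y, hy, hxy, h1, h2⟩
    refine ⟨_, Finset.mem_image_of_mem _ he, _, Finset.mem_image_of_mem _ hf, _,
      Finset.mem_image_of_mem _ hx, _, Finset.mem_image_of_mem _ hy,
      h (hU _ he _ hx) (hU _ hf _ hy) hxy, ?_, ?_⟩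
    · rw [rk_image_of_mono (hm _ he) hx, h1]
    · rw [rk_image_of_mono (hm _ hf) hy, h2]

lemma mem_deleteJth {j x : ℕ} {e : Finset ℕ} : x ∈ deleteJth j e ↔ x ∈ e ∧ rk e x ≠ j := by
  unfold deleteJth rk
  simp only [Finset.mem_filter]

lemma deleteJth_eq {r j : ℕ} {e : Finset ℕ} {a : ℕ → ℕ} (ha : Enum r e a) (h1 : 1 ≤ j)
    (h2 : j ≤ r) : deleteJth j e = e.erase (a j) := by
  ext x
  rw [mem_deleteJth, Finset.mem_erase]
  constructor
  · rintro ⟨hx, h⟩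
    refine ⟨?_, hx⟩
    rintro rfl
    exact h (ha.rk_a j h1 h2)
  · rintro ⟨h, hx⟩
    refine ⟨hx, ?_⟩
    rintro rfl
    exact h (ha.surj x hx).2.2.symm

lemma rk_deleteJth {r j : ℕ} {e : Finset ℕ} (hc : e.card = r) (h1 : 1 ≤ j)
    (h2 : j ≤ r) (x : ℕ) : rk (deleteJth j e) x = if rk e x < j then rk e x else rk e x - 1 := by
  obtain ⟨a, ha⟩ := exists_enum r e hc
  rw [deleteJth_eq ha h1 h2]
  have := ha.le_rk_iff (x := x) h1 h2
  split_ifs with h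
  · unfold rk
    congr 1
    ext z
    simp only [Finset.mem_filter, Finset.mem_erase]
    constructor
    · rintro ⟨⟨_, h1⟩, h2⟩; exact ⟨h1, h2⟩
    · rintro ⟨h1, h2⟩
      refine ⟨⟨?_, h1⟩, h2⟩
      omega
  · unfold rk
    rw [Finset.filter_erase, Finset.card_erase_of_mem]
    simp only [Finset.mem_filter]
    exact ⟨ha.mem j h1 h2, by omega⟩

def dl (j i : ℕ) : ℕ := if i < j then i else i + 1

lemma J_delete {r j : ℕ} {S : Finset (Finset ℕ)} (hc : ∀ e ∈ S, e.card = r) (h1 : 1 ≤ j)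
    (h2 : j ≤ r) (i k : ℕ) : J (S.image (deleteJth j)) i k ↔ J S (dl j i) (dl j k) := by
  unfold J dl
  constructor
  · rintro ⟨hik, e, he', f, hf', x, hx, y, hy, hxy, h3, h4⟩
    obtain ⟨e, he, rfl⟩ := Finset.mem_image.1 he'
    obtain ⟨f, hf, rfl⟩ := Finset.mem_image.1 hf'
    rw [mem_deleteJth] at hx hy
    rw [rk_deleteJth (hc _ he) h1 h2] at h3
    rw [rk_deleteJth (hc _ hf) h1 h2] at h4
    refine ⟨by split_ifs <;> omega, e, he, f, hf, x, hx.1, y, hy.1, hxy, ?_, ?_⟩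
    · have := hx.2
      split_ifs at h3 ⊢ <;> omega
    · have := hy.2
      split_ifs at h4 ⊢ <;> omega
  · rintro ⟨hik, e, he, f, hf, x, hx, y, hy, hxy, h3, h4⟩
    refine ⟨by split_ifs at hik <;> omega, _, Finset.mem_image_of_mem _ he, _,
      Finset.mem_image_of_mem _ hf, x, mem_deleteJth.2 ⟨hx, ?_⟩, y, mem_deleteJth.2 ⟨hy, ?_⟩,
      hxy, ?_, ?_⟩
    · rw [h3]; split_ifs <;> omega
    · rw [h4]; split_ifs <;> omega
    · rw [rk_deleteJth (hc _ he) h1 h2, h3]; split_ifs <;> omega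
    · rw [rk_deleteJth (hc _ hf) h1 h2, h4]; split_ifs <;> omega

lemma patternDelete_eq (j : ℕ) (S : Finset (Finset ℕ)) : patternDelete j S =
    (S.image (deleteJth j)).image (fun e => e.image (rk ((S.image (deleteJth j)).biUnion id))) := rfl

lemma J_patternDelete {r j : ℕ} {S : Finset (Finset ℕ)} (hc : ∀ e ∈ S, e.card = r) (h1 : 1 ≤ j)
    (h2 : j ≤ r) (i k : ℕ) : J (patternDelete j S) i k ↔ J S (dl j i) (dl j k) := by
  rw [patternDelete_eq, J_image (rk_strictMonoOn _), J_delete hc h1 h2]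

lemma exists_edges {r : ℕ} {P : Finset (Finset ℕ)} (hr : 1 ≤ r) (h : IsOrderedMatching r 2 P) :
    ∃ E F, P = {E, F} ∧ E ≠ F ∧ E.card = r ∧ F.card = r ∧ Disjoint E F ∧
      E ∪ F = Finset.Icc 1 (2 * r) ∧ 1 ∈ E := by
  obtain ⟨h1, h2, h3, h4⟩ := h
  obtain ⟨E, F, hne, rfl⟩ := Finset.card_eq_two.1 h1
  have hU : E ∪ F = Finset.Icc 1 (2 * r) := by
    rw [mul_comm, ← h4]; simp
  have : 1 ∈ E ∪ F := by rw [hU]; simp; omega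
  rcases Finset.mem_union.1 this with h | h
  · exact ⟨E, F, rfl, hne, h2 _ (by simp), h2 _ (by simp), h3 _ (by simp) _ (by simp) hne, hU, h⟩
  · exact ⟨F, E, Finset.pair_comm _ _, hne.symm, h2 _ (by simp), h2 _ (by simp),
      h3 _ (by simp) _ (by simp) hne.symm, by rw [Finset.union_comm, hU], h⟩

lemma matching_delete {r j : ℕ} {P : Finset (Finset ℕ)} (hr : 2 ≤ r) (h : IsOrderedMatching r 2 P)
    (h1 : 1 ≤ j) (h2 : j ≤ r) : IsOrderedMatching (r - 1) 2 (patternDelete j P) := by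
  obtain ⟨E, F, rfl, hne, hE, hF, hd, hU, -⟩ := exists_edges (by omega) h
  obtain ⟨a, ha⟩ := exists_enum r E hE
  obtain ⟨b, hb⟩ := exists_enum r F hF
  rw [patternDelete_eq]
  have hS : ({E, F} : Finset (Finset ℕ)).image (deleteJth j) = {deleteJth j E, deleteJth j F} := by
    simp
  rw [hS]
  have hE' : (deleteJth j E).card = r - 1 := by
    rw [deleteJth_eq ha h1 h2, Finset.card_erase_of_mem (ha.mem _ h1 h2), hE]
  have hF' : (deleteJth j F).card = r - 1 := by
    rw [deleteJth_eq hb h1 h2, Finset.card_erase_of_mem (hb.mem _ h1 h2), hF]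
  have hd' : Disjoint (deleteJth j E) (deleteJth j F) :=
    hd.mono (Finset.filter_subset _ _) (Finset.filter_subset _ _)
  generalize deleteJth j E = A at *
  generalize deleteJth j F = B at *
  have hV : ({A, B} : Finset (Finset ℕ)).biUnion id = A ∪ B := by simp
  rw [hV]
  have hm := rk_strictMonoOn (A ∪ B)
  have hA : StrictMonoOn (rk (A ∪ B)) (A : Set ℕ) := hm.mono (by simp)
  have hB : StrictMonoOn (rk (A ∪ B)) (B : Set ℕ) := hm.mono (by simp)
  have hdi : Disjoint (A.image (rk (A ∪ B))) (B.image (rk (A ∪ B))) := by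
    rw [Finset.disjoint_left]
    intro z hz hz'
    obtain ⟨x, hx, rfl⟩ := Finset.mem_image.1 hz
    obtain ⟨y, hy, hxy⟩ := Finset.mem_image.1 hz'
    have : y = x := hm.injOn (by simp [hy]) (by simp [hx]) hxy
    subst this
    exact Finset.disjoint_left.1 hd' hx hy
  have hcA : (A.image (rk (A ∪ B))).card = r - 1 := by
    rw [Finset.card_image_of_injOn hA.injOn, hE']
  have hcB : (B.image (rk (A ∪ B))).card = r - 1 := by
    rw [Finset.card_image_of_injOn hB.injOn, hF']
  have hne' : A.image (rk (A ∪ B)) ≠ B.image (rk (A ∪ B)) := by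
    intro heq
    rw [heq] at hdi
    rw [disjoint_self] at hdi
    rw [hdi] at hcB
    simp at hcB
    omega
  have hI : ({A, B} : Finset (Finset ℕ)).image (fun e => e.image (rk (A ∪ B))) =
    {A.image (rk (A ∪ B)), B.image (rk (A ∪ B))} := by simp
  rw [hI]
  refine ⟨Finset.card_pair hne', ?_, ?_, ?_⟩
  · intro e he
    simp only [Finset.mem_insert, Finset.mem_singleton] at he
    rcases he with rfl | rfl <;> assumption
  · intro e he f hf hef
    simp only [Finset.mem_insert, Finset.mem_singleton] at he hf
    rcases he with rfl | rfl <;> rcases hf with rfl | rfl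
    · exact absurd rfl hef
    · exact hdi
    · exact hdi.symm
    · exact absurd rfl hef
  · rw [Finset.biUnion_insert, Finset.singleton_biUnion]
    simp only [id]
    rw [← Finset.image_union, rk_image, Finset.card_union_of_disjoint hd', hE', hF']
    congr 1
    omega


lemma J_of_forms {r : ℕ} {e f : Finset ℕ} {P : Finset (Finset ℕ)} (h : FormsPattern r e f P)
    (i k : ℕ) : J P i k ↔ J {e, f} i k := by
  obtain ⟨φ, h1, -, h3⟩ := h
  have : P = ({e, f} : Finset (Finset ℕ)).image (fun e => e.image φ) := by
    rw [← h3]; simp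
  rw [this]
  apply J_image
  simpa using h1

lemma trans_core {r : ℕ} {P : Finset (Finset ℕ)} {e f g : Finset ℕ} {a b c : ℕ → ℕ}
    (ha : Enum r e a) (hb : Enum r f b) (hc : Enum r g c)
    (hef : FormsPattern r e f P) (hfg : FormsPattern r f g P) (heg : FormsPattern r e g P)
    {i m k : ℕ} (h1 : a i < b i) (h2 : b i < c i) (h3 : J P i m) (h4 : J P m k) : J P i k := by
  have A := (J_iff ha hb _ _).1 ((J_of_forms hef _ _).1 h3)
  have B := (J_iff ha hb _ _).1 ((J_of_forms hef _ _).1 h4)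
  have C := (J_iff hb hc _ _).1 ((J_of_forms hfg _ _).1 h3)
  rw [J_of_forms heg, J_iff ha hc]
  obtain ⟨A1, A2, A3, A4⟩ := A
  obtain ⟨B1, B2, B3, B4⟩ := B
  obtain ⟨-, -, -, C4⟩ := C
  have b1 := hb.le A1 A2 A3
  have b2 := hb.le B1 B2 B3
  have c1 := hc.le A1 A2 A3
  have a1 := ha.le A1 A2 A3
  refine ⟨A1, by omega, B3, Or.inl ?_⟩
  omega

lemma trans_of_collectable {r : ℕ} {P : Finset (Finset ℕ)} (h : Collectable r P) : JTrans P := by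
  intro i m k h1 h2
  obtain ⟨K, ⟨hc, hd, hf⟩, hK⟩ := h 3
  obtain ⟨e, f, g, hef, heg, hfg, rfl⟩ := Finset.card_eq_three.1 hK
  have hform : ∀ x ∈ ({e, f, g} : Finset (Finset ℕ)), ∀ y ∈ ({e, f, g} : Finset (Finset ℕ)),
      x ≠ y → FormsPattern r x y P := by
    intro x hx y hy hxy
    obtain ⟨P', hP', h⟩ := hf x hx y hy hxy
    rw [Set.mem_singleton_iff] at hP'
    exact hP' ▸ h
  have me : e ∈ ({e, f, g} : Finset (Finset ℕ)) := by simp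
  have mf : f ∈ ({e, f, g} : Finset (Finset ℕ)) := by simp
  have mg : g ∈ ({e, f, g} : Finset (Finset ℕ)) := by simp
  obtain ⟨a, ha⟩ := exists_enum r e (hc e me)
  obtain ⟨b, hb⟩ := exists_enum r f (hc f mf)
  obtain ⟨c, hc'⟩ := exists_enum r g (hc g mg)
  have F1 := hform e me f mf hef
  have F2 := hform f mf e me hef.symm
  have F3 := hform e me g mg heg
  have F4 := hform g mg e me heg.symm
  have F5 := hform f mf g mg hfg
  have F6 := hform g mg f mf hfg.symm
  have A := (J_iff ha hb _ _).1 ((J_of_forms F1 _ _).1 h1)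
  have hi1 : 1 ≤ i := A.1
  have hi2 : i ≤ r := A.2.1.trans A.2.2.1
  have n1 : a i ≠ b i := fun h => Finset.disjoint_left.1 (hd e me f mf hef) (ha.mem i hi1 hi2)
    (h ▸ hb.mem i hi1 hi2)
  have n2 : a i ≠ c i := fun h => Finset.disjoint_left.1 (hd e me g mg heg) (ha.mem i hi1 hi2)
    (h ▸ hc'.mem i hi1 hi2)
  have n3 : b i ≠ c i := fun h => Finset.disjoint_left.1 (hd f mf g mg hfg) (hb.mem i hi1 hi2)
    (h ▸ hc'.mem i hi1 hi2)
  rcases lt_or_gt_of_ne n1 with u | u <;> rcases lt_or_gt_of_ne n2 with v | v <;>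
    rcases lt_or_gt_of_ne n3 with w | w
  · exact trans_core ha hb hc' F1 F5 F3 u w h1 h2
  · exact trans_core ha hc' hb F3 F6 F1 v w h1 h2
  · omega
  · exact trans_core hc' ha hb F4 F1 F6 v u h1 h2
  · exact trans_core hb ha hc' F2 F3 F5 u v h1 h2
  · omega
  · exact trans_core hb hc' ha F5 F4 F2 w v h1 h2
  · exact trans_core hc' hb ha F6 F2 F4 w u h1 h2

lemma forms_of_mono {r : ℕ} {E F e f : Finset ℕ} {ψ : ℕ → ℕ}
    (h : StrictMonoOn ψ ((E ∪ F : Finset ℕ) : Set ℕ)) (hU : E ∪ F = Finset.Icc 1 (2 * r))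
    (he : E.image ψ = e) (hf : F.image ψ = f) : FormsPattern r e f {E, F} := by
  have inv : ∀ x ∈ E ∪ F, Function.invFunOn ψ ((E ∪ F : Finset ℕ) : Set ℕ) (ψ x) = x := by
    intro x hx
    exact h.injOn.leftInvOn_invFunOn (by exact_mod_cast hx)
  have hinv : ∀ G ⊆ E ∪ F, (G.image ψ).image (Function.invFunOn ψ ((E ∪ F : Finset ℕ) : Set ℕ))
      = G := by
    intro G hG
    rw [Finset.image_image]
    ext z
    simp only [Finset.mem_image, Function.comp]
    constructor
    · rintro ⟨x, hx, rfl⟩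
      rwa [inv x (hG hx)]
    · intro hz
      exact ⟨z, hz, inv z (hG hz)⟩
  have hef : e ∪ f = (E ∪ F).image ψ := by rw [Finset.image_union, he, hf]
  refine ⟨Function.invFunOn ψ ((E ∪ F : Finset ℕ) : Set ℕ), ?_, ?_, ?_⟩
  · rw [hef]
    intro x hx y hy hxy
    simp only [Finset.coe_image, Set.mem_image, Finset.mem_coe] at hx hy
    obtain ⟨x, hx, rfl⟩ := hx
    obtain ⟨y, hy, rfl⟩ := hy
    rw [inv x hx, inv y hy]
    exact (h.lt_iff_lt (by exact_mod_cast hx) (by exact_mod_cast hy)).1 hxy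
  · rw [hef, hinv _ (Finset.Subset.refl _), hU]
  · rw [← he, ← hf, hinv _ Finset.subset_union_left, hinv _ Finset.subset_union_right]

lemma lex_lt {s s' o o' n n' N R : ℕ} (ho : o < N) (hn : n < R)
    (h : s < s' ∨ (s = s' ∧ (o < o' ∨ (o = o' ∧ n < n')))) :
    (s * N + o) * R + n < (s' * N + o') * R + n' := by
  have h2 : s * N + o < s' * N + o' ∨ (s * N + o = s' * N + o' ∧ n < n') := by
    rcases h with h | ⟨rfl, h | ⟨rfl, h⟩⟩
    · left
      have : (s + 1) * N ≤ s' * N := Nat.mul_le_mul_right _ h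
      nlinarith
    · left; omega
    · right; omega
  rcases h2 with h | ⟨h, h'⟩
  · have : (s * N + o + 1) * R ≤ (s' * N + o') * R := Nat.mul_le_mul_right _ h
    nlinarith
  · rw [h]; omega

lemma collectable_of_trans {r : ℕ} (hr : 1 ≤ r) {P : Finset (Finset ℕ)}
    (hP : IsOrderedMatching r 2 P) (ht : JTrans P) : Collectable r P := by
  obtain ⟨E, F, rfl, hne, hE, hF, hd, hU, -⟩ := exists_edges hr hP
  obtain ⟨a, ha⟩ := exists_enum r E hE
  obtain ⟨b, hb⟩ := exists_enum r F hF
  have hJ := J_iff ha hb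
  have hab : ∀ n, 1 ≤ n → n ≤ r → a n ≠ b n := fun n h1 h2 h =>
    Finset.disjoint_left.1 hd (ha.mem n h1 h2) (h ▸ hb.mem n h1 h2)
  have hJr : ∀ n, 1 ≤ n → n ≤ r → J {E, F} n n := by
    intro n h1 h2
    rw [hJ]
    refine ⟨h1, le_rfl, h2, lt_or_gt_of_ne (hab n h1 h2)⟩
  -- block starts
  obtain ⟨s, hs⟩ : ∃ s : ℕ → ℕ, ∀ n, 1 ≤ n → n ≤ r →
      J {E, F} (s n) n ∧ ∀ i, J {E, F} i n → s n ≤ i := by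
    refine ⟨fun n => sInf {i | J {E, F} i n}, ?_⟩
    intro n h1 h2
    exact ⟨Nat.sInf_mem (s := {i | J {E, F} i n}) ⟨n, hJr n h1 h2⟩, fun i hi => Nat.sInf_le hi⟩
  have hmono : ∀ n m, 1 ≤ n → n ≤ m → m ≤ r → s n ≤ s m := by
    intro n m h1 h2 h3
    obtain ⟨A1, A2⟩ := hs n h1 (by omega)
    obtain ⟨B1, B2⟩ := hs m (by omega) h3
    by_cases hc : s m ≤ n
    · apply A2
      rw [hJ] at B1 ⊢
      have := ha.le h1 h2 h3
      have := hb.le h1 h2 h3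
      omega
    · rw [hJ] at A1; omega
  have heqJ : ∀ n m, 1 ≤ n → n ≤ m → m ≤ r → s n = s m → J {E, F} n m := by
    intro n m h1 h2 h3 h4
    obtain ⟨A1, A2⟩ := hs n h1 (by omega)
    obtain ⟨B1, B2⟩ := hs m (by omega) h3
    rw [hJ] at A1 B1 ⊢
    rw [← h4] at B1
    have := ha.le A1.1 A1.2.1 (by omega)
    have := hb.le A1.1 A1.2.1 (by omega)
    omega
  have hJeq : ∀ n m, J {E, F} n m → s n = s m := by
    intro n m h
    have h' := (hJ _ _).1 h
    apply le_antisymm (hmono _ _ (by omega) (by omega) (by omega))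
    exact (hs m (by omega) (by omega)).2 _ (ht _ _ _ (hs n (by omega) (by omega)).1 h)
  intro N
  let o : ℕ → ℕ → ℕ := fun t n => if a n < b n then t else N - 1 - t
  let pos : ℕ → ℕ → ℕ := fun t n => (s n * N + o t n) * (r + 1) + n
  have ho : ∀ t n, t < N → o t n < N := by
    intro t n h
    simp only [o]; split_ifs <;> omega
  -- monotone within an edge
  have hp1 : ∀ t n m, t < N → 1 ≤ n → n < m → m ≤ r → pos t n < pos t m := by
    intro t n m h0 h1 h2 h3
    apply lex_lt (ho _ _ h0) (by omega)
    rcases (hmono n m h1 h2.le h3).lt_or_eq with h | h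
    · exact Or.inl h
    · refine Or.inr ⟨h, Or.inr ⟨?_, h2⟩⟩
      have := (hJ _ _).1 (heqJ n m h1 h2.le h3 h)
      have := ha.mono n m h1 h2 h3
      have := hb.mono n m h1 h2 h3
      simp only [o]
      split_ifs <;> omega
  have hp2 : ∀ t u n m, t < u → u < N → 1 ≤ n → n ≤ r → 1 ≤ m → m ≤ r → a n < b m →
      pos t n < pos u m := by
    intro t u n m h0 h0' h1 h2 h3 h4 h5
    apply lex_lt (ho _ _ (by omega)) (by omega)
    rcases le_total m n with h | h
    · have h6 : J {E, F} m n := by rw [hJ]; omega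
      have h7 := ha.le h3 h h2
      have h8 := hb.le h3 h h2
      refine Or.inr ⟨(hJeq _ _ h6).symm, Or.inl ?_⟩
      simp only [o]
      split_ifs <;> omega
    · rcases (hmono n m h1 h h4).lt_or_eq with h' | h'
      · exact Or.inl h'
      · refine Or.inr ⟨h', Or.inl ?_⟩
        have h6 := (hJ _ _).1 (heqJ n m h1 h h4 h')
        have h7 := ha.le h1 h h4
        have h8 := hb.le h1 h h4
        simp only [o]
        split_ifs <;> omega
  have hp3 : ∀ t u n m, t < u → u < N → 1 ≤ n → n ≤ r → 1 ≤ m → m ≤ r → b m < a n →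
      pos u m < pos t n := by
    intro t u n m h0 h0' h1 h2 h3 h4 h5
    apply lex_lt (ho _ _ (by omega)) (by omega)
    rcases le_total n m with h | h
    · have h6 : J {E, F} n m := by rw [hJ]; omega
      have h7 := ha.le h1 h h4
      have h8 := hb.le h1 h h4
      refine Or.inr ⟨(hJeq _ _ h6).symm, Or.inl ?_⟩
      simp only [o]
      split_ifs <;> omega
    · rcases (hmono m n h3 h h2).lt_or_eq with h' | h'
      · exact Or.inl h'
      · refine Or.inr ⟨h', Or.inl ?_⟩
        have h6 := (hJ _ _).1 (heqJ m n h3 h h2 h')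
        have h7 := ha.le h3 h h2
        have h8 := hb.le h3 h h2
        simp only [o]
        split_ifs <;> omega
  let ed : ℕ → Finset ℕ := fun t => (Finset.Icc 1 r).image (pos t)
  have hcard : ∀ t, t < N → (ed t).card = r := by
    intro t h
    simp only [ed]
    rw [Finset.card_image_of_injOn]
    · simp
    · have : StrictMonoOn (pos t) ((Finset.Icc 1 r : Finset ℕ) : Set ℕ) := by
        intro n hn m hm hnm
        simp only [Finset.coe_Icc, Set.mem_Icc] at hn hm
        exact hp1 t n m h hn.1 hnm hm.2
      exact this.injOn
  have hdisj : ∀ t u, t < u → u < N → Disjoint (ed t) (ed u) := by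
    intro t u h1 h2
    rw [Finset.disjoint_left]
    intro z hz hz'
    obtain ⟨n, hn, rfl⟩ := Finset.mem_image.1 hz
    obtain ⟨m, hm, hmn⟩ := Finset.mem_image.1 hz'
    rw [Finset.mem_Icc] at hn hm
    have hne : a n ≠ b m := fun h =>
      Finset.disjoint_left.1 hd (ha.mem n hn.1 hn.2) (h ▸ hb.mem m hm.1 hm.2)
    rcases lt_or_gt_of_ne hne with h | h
    · have := hp2 t u n m h1 h2 hn.1 hn.2 hm.1 hm.2 h; omega
    · have := hp3 t u n m h1 h2 hn.1 hn.2 hm.1 hm.2 h; omega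
  have hform : ∀ t u, t < u → u < N → FormsPattern r (ed t) (ed u) {E, F} := by
    intro t u h1 h2
    have hF' : ∀ x ∈ F, x ∉ E := fun x hx hx' => Finset.disjoint_left.1 hd hx' hx
    apply forms_of_mono (ψ := fun x => if x ∈ E then pos t (rk E x) else pos u (rk F x)) ?_ hU
    · ext z
      simp only [Finset.mem_image, ed, Finset.mem_Icc]
      constructor
      · rintro ⟨x, hx, rfl⟩
        have := ha.surj x hx
        exact ⟨rk E x, ⟨this.1, this.2.1⟩, by simp [hx]⟩
      · rintro ⟨n, hn, rfl⟩
        exact ⟨a n, ha.mem _ hn.1 hn.2, by simp [ha.mem _ hn.1 hn.2, ha.rk_a _ hn.1 hn.2]⟩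
    · ext z
      simp only [Finset.mem_image, ed, Finset.mem_Icc]
      constructor
      · rintro ⟨x, hx, rfl⟩
        have := hb.surj x hx
        exact ⟨rk F x, ⟨this.1, this.2.1⟩, by simp [hF' x hx]⟩
      · rintro ⟨n, hn, rfl⟩
        exact ⟨b n, hb.mem _ hn.1 hn.2, by
          simp [hF' _ (hb.mem _ hn.1 hn.2), hb.rk_a _ hn.1 hn.2]⟩
    · intro x hx y hy hxy
      simp only [Finset.mem_coe, Finset.mem_union] at hx hy
      rcases hx with hx | hx <;> rcases hy with hy | hy
      · have X := ha.surj x hx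
        have Y := ha.surj y hy
        simp only [hx, hy, if_true]
        exact hp1 t _ _ (by omega) X.1 (rk_lt hxy hy) Y.2.1
      · have X := ha.surj x hx
        have Y := hb.surj y hy
        simp only [hx, hF' y hy, if_true, if_false]
        exact hp2 t u _ _ h1 h2 X.1 X.2.1 Y.1 Y.2.1 (by rw [X.2.2, Y.2.2]; exact hxy)
      · have X := hb.surj x hx
        have Y := ha.surj y hy
        simp only [hy, hF' x hx, if_true, if_false]
        exact hp3 t u _ _ h1 h2 Y.1 Y.2.1 X.1 X.2.1 (by rw [X.2.2, Y.2.2]; exact hxy)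
      · have X := hb.surj x hx
        have Y := hb.surj y hy
        simp only [hF' x hx, hF' y hy, if_false]
        exact hp1 u _ _ (by omega) X.1 (rk_lt hxy hy) Y.2.1
  have hform' : ∀ t u, t < N → u < N → t ≠ u →
      Disjoint (ed t) (ed u) ∧ FormsPattern r (ed t) (ed u) {E, F} := by
    intro t u h1 h2 h3
    rcases lt_or_gt_of_ne h3 with h | h
    · exact ⟨hdisj t u h h2, hform t u h h2⟩
    · refine ⟨(hdisj u t h h1).symm, ?_⟩
      obtain ⟨φ, g1, g2, g3⟩ := hform u t h h1
      exact ⟨φ, by rwa [Finset.union_comm], by rwa [Finset.union_comm], by rwa [Finset.pair_comm]⟩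
  refine ⟨(Finset.range N).image ed, ⟨?_, ?_, ?_⟩, ?_⟩
  · intro e he
    obtain ⟨t, ht, rfl⟩ := Finset.mem_image.1 he
    exact hcard t (Finset.mem_range.1 ht)
  · intro e he f hf hef
    obtain ⟨t, ht, rfl⟩ := Finset.mem_image.1 he
    obtain ⟨u, hu, rfl⟩ := Finset.mem_image.1 hf
    exact (hform' t u (Finset.mem_range.1 ht) (Finset.mem_range.1 hu)
      (fun h => hef (h ▸ rfl))).1
  · intro e he f hf hef
    obtain ⟨t, ht, rfl⟩ := Finset.mem_image.1 he
    obtain ⟨u, hu, rfl⟩ := Finset.mem_image.1 hf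
    exact ⟨_, rfl, (hform' t u (Finset.mem_range.1 ht) (Finset.mem_range.1 hu)
      (fun h => hef (h ▸ rfl))).2⟩
  · rw [Finset.card_image_of_injOn, Finset.card_range]
    intro t ht u hu htu
    simp only [Finset.coe_range, Set.mem_Iio] at ht hu
    by_contra hc
    have h1 := (hform' t u ht hu hc).1
    have h2 := hcard u hu
    rw [htu, disjoint_self] at h1
    rw [h1] at h2
    simp at h2
    omega


/-- Word version of the joined relation. -/
def JW (w : List Bool) (i k : ℕ) : Prop :=
  1 ≤ i ∧ i ≤ k ∧ ∃ (c : Bool) (n : ℕ), k ≤ (w.take n).count c ∧ (w.take n).count (!c) < i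

def WTrans (w : List Bool) : Prop := ∀ i m k, JW w i m → JW w m k → JW w i k

lemma count_block (t : ℕ) (b : Bool) (w : List Bool) (n : ℕ) :
    ((List.replicate t b ++ List.replicate t (!b) ++ w).take n).count b
      = min n t + (w.take (n - 2 * t)).count b ∧
    ((List.replicate t b ++ List.replicate t (!b) ++ w).take n).count (!b)
      = min (n - t) t + (w.take (n - 2 * t)).count (!b) := by
  have h : n - t - t = n - 2 * t := by omega
  cases b <;> simp [List.take_append, List.count_append, List.take_replicate, List.count_replicate, h]

lemma JW_block (t : ℕ) (b : Bool) (w : List Bool) (i k : ℕ) :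
    JW (List.replicate t b ++ List.replicate t (!b) ++ w) i k ↔
      (1 ≤ i ∧ i ≤ k ∧ k ≤ t) ∨ (t < i ∧ JW w (i - t) (k - t)) := by
  constructor
  · rintro ⟨h1, h2, c, n, h3, h4⟩
    obtain ⟨A, B⟩ := count_block t b w n
    have key : c = b ∨ c = !b := by cases b <;> cases c <;> simp
    rcases Nat.lt_or_ge (2 * t) n with hn | hn
    · right
      rcases key with rfl | rfl
      · rw [A] at h3
        rw [B] at h4
        exact ⟨by omega, by omega, by omega, c, n - 2 * t, by omega, by omega⟩
      · rw [B] at h3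
        rw [Bool.not_not, A] at h4
        refine ⟨by omega, by omega, by omega, !b, n - 2 * t, by omega, ?_⟩
        rw [Bool.not_not]; omega
    · left
      have h0 : n - 2 * t = 0 := by omega
      rw [h0] at A B
      simp only [List.take_zero, List.count_nil] at A B
      rcases key with rfl | rfl
      · exact ⟨h1, h2, by omega⟩
      · exact ⟨h1, h2, by omega⟩
  · rintro (⟨h1, h2, h3⟩ | ⟨h0, h1, h2, c, n, h3, h4⟩)
    · refine ⟨h1, h2, b, t, ?_, ?_⟩
      · rw [(count_block t b w t).1]; omega
      · rw [(count_block t b w t).2]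
        have : t - 2 * t = 0 := by omega
        rw [this]; simp; omega
    · refine ⟨by omega, by omega, c, n + 2 * t, ?_⟩
      obtain ⟨A, B⟩ := count_block t b w (n + 2 * t)
      have h0 : n + 2 * t - 2 * t = n := by omega
      rw [h0] at A B
      have key : c = b ∨ c = !b := by cases b <;> cases c <;> simp
      rcases key with rfl | rfl
      · rw [A, B]; omega
      · rw [Bool.not_not] at h4 ⊢
        rw [A, B]; omega

lemma JW_of_splitting (lam : List ℕ) : ∀ w w' : List Bool, IsBlockSplitting w lam →
    IsBlockSplitting w' lam → ∀ i k, JW w i k ↔ JW w' i k := by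
  induction lam with
  | nil =>
    rintro w w' ⟨-, bs, h1, rfl⟩ ⟨-, bs', h2, rfl⟩ i k
    simp
  | cons t lam ih =>
    rintro w w' ⟨h, bs, h1, rfl⟩ ⟨h', bs', h2, rfl⟩ i k
    obtain _ | ⟨b, bs⟩ := bs
    · simp at h1
    obtain _ | ⟨b', bs'⟩ := bs'
    · simp at h2
    simp only [List.zipWith_cons_cons, List.flatten_cons]
    rw [JW_block, JW_block]
    rw [ih _ _ ⟨fun t ht => h t (by simp [ht]), bs, by simpa using h1, rfl⟩
      ⟨fun t ht => h t (by simp [ht]), bs', by simpa using h2, rfl⟩]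

lemma JW_mono {w : List Bool} {i k k' : ℕ} (h : JW w i k) (h1 : i ≤ k') (h2 : k' ≤ k) :
    JW w i k' := by
  obtain ⟨a, b, c, n, d, e⟩ := h
  exact ⟨a, h1, c, n, by omega, e⟩

lemma first_block {w : List Bool} {r t : ℕ} (hc : ∀ c, w.count c = r)
    (ht : WTrans w) (h1 : JW w 1 t) (h2 : ¬ JW w 1 (t + 1)) :
    ∃ b w1, w = List.replicate t b ++ List.replicate t (!b) ++ w1 := by
  obtain ⟨-, ht1, c, n, h3, h4⟩ := id h1
  have htr : t ≤ r := by
    rw [← hc c]; exact h3.trans ((List.take_sublist n w).count_le c)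
  have hrep : ∃ v, w = List.replicate t c ++ v := by
    have : w.take n = List.replicate (w.take n).length c := by
      apply List.eq_replicate_of_mem
      intro x hx
      by_contra hne
      have : x = !c := by cases x <;> cases c <;> simp_all
      rw [this] at hx
      have := List.count_pos_iff.2 hx
      omega
    have hl := List.count_le_length (a := c) (l := w.take n)
    have e : (w.take n).length = t + ((w.take n).length - t) := by omega
    rw [e, List.replicate_add] at this
    refine ⟨List.replicate ((w.take n).length - t) c ++ w.drop n, ?_⟩
    rw [← List.append_assoc, ← this, List.take_append_drop]
  obtain ⟨v, hv⟩ := hrep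
  have step : ∀ s, s ≤ t → ∃ v', w = List.replicate t c ++ List.replicate s (!c) ++ v' := by
    intro s
    induction s with
    | zero => intro _; exact ⟨v, by simpa using hv⟩
    | succ s ih =>
      intro hs
      obtain ⟨v', hv'⟩ := ih (by omega)
      obtain _ | ⟨x, v''⟩ := v'
      · exfalso
        have := hc (!c)
        rw [hv'] at this
        cases c <;> simp [List.count_replicate] at this <;> omega
      · have key : x = c ∨ x = !c := by cases x <;> cases c <;> simp
        rcases key with rfl | rfl
        · exfalso
          apply h2
          refine ht 1 (s + 1) (t + 1) (JW_mono h1 (by omega) hs) ⟨by omega, by omega, x, t + s + 1, ?_⟩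
          have : w.take (t + s + 1) = List.replicate t x ++ List.replicate s (!x) ++ [x] := by
            have e : w = (List.replicate t x ++ List.replicate s (!x) ++ [x]) ++ v'' := by
              rw [hv']; simp
            rw [e]
            apply List.take_left'
            simp [add_assoc]
          rw [this]
          cases x <;> simp [List.count_replicate, List.count_append]
        · refine ⟨v'', ?_⟩
          rw [hv', List.replicate_succ']
          simp
  obtain ⟨v', hv'⟩ := step t le_rfl
  exact ⟨c, v', hv'⟩

lemma common_splitting (r : ℕ) : ∀ w w' : List Bool, (∀ c, w.count c = r) →
    (∀ c, w'.count c = r) → WTrans w → (∀ i k, JW w i k ↔ JW w' i k) →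
    ∃ lam, IsBlockSplitting w lam ∧ IsBlockSplitting w' lam := by
  induction r using Nat.strong_induction_on with
  | _ r ih =>
  intro w w' hw hw' ht hJ
  have len : ∀ w : List Bool, w.length = w.count true + w.count false := by
    intro w
    induction w with
    | nil => simp
    | cons a l ih => cases a <;> simp only [List.length_cons, List.count_cons, ih] <;> simp <;> omega
  rcases Nat.eq_zero_or_pos r with rfl | hr
  · have e1 : w = [] := by
      have := len w; rw [hw, hw] at this; exact List.length_eq_zero_iff.1 this
    have e2 : w' = [] := by
      have := len w'; rw [hw', hw'] at this; exact List.length_eq_zero_iff.1 this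
    subst e1 e2
    exact ⟨[], ⟨by simp, [], by simp, by simp⟩, ⟨by simp, [], by simp, by simp⟩⟩
  · have h11 : JW w 1 1 := by
      obtain _ | ⟨x, v⟩ := w
      · have := hw true; simp at this; omega
      · refine ⟨le_rfl, le_rfl, x, 1, ?_⟩
        cases x <;> simp
    have hend : ¬ JW w 1 (r + 1) := by
      rintro ⟨-, -, c, n, h, -⟩
      have := (List.take_sublist n w).count_le c
      rw [hw] at this
      omega
    obtain ⟨t, ht0, ht1, ht2⟩ : ∃ t, 1 ≤ t ∧ JW w 1 t ∧ ¬ JW w 1 (t + 1) := by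
      by_contra hcon
      push Not at hcon
      have : ∀ t, 1 ≤ t → JW w 1 t := by
        intro t h
        induction t, h using Nat.le_induction with
        | base => exact h11
        | succ t h ih => exact hcon t h ih
      exact hend (this _ (by omega))
    have ht' : WTrans w' := by
      intro i m k
      rw [← hJ, ← hJ, ← hJ]
      exact ht i m k
    obtain ⟨b, w1, rfl⟩ := first_block hw ht ht1 ht2
    obtain ⟨b', w1', rfl⟩ := first_block hw' ht' ((hJ _ _).1 ht1) (fun h => ht2 ((hJ _ _).2 h))
    have cnt : ∀ (b : Bool) (v : List Bool),
        (∀ c, (List.replicate t b ++ List.replicate t (!b) ++ v).count c = r) →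
        t ≤ r ∧ ∀ c, v.count c = r - t := by
      intro b v h
      have h1 := h true
      have h2 := h false
      cases b <;> simp [List.count_replicate] at h1 h2 <;> refine ⟨by omega, ?_⟩ <;>
        intro c <;> cases c <;> omega
    have sub : ∀ (b : Bool) (v : List Bool) (i k : ℕ), JW v i k ↔
        1 ≤ i ∧ JW (List.replicate t b ++ List.replicate t (!b) ++ v) (i + t) (k + t) := by
      intro b v i k
      rw [JW_block]
      simp only [Nat.add_sub_cancel]
      constructor
      · intro h
        have := h.1
        exact ⟨this, Or.inr ⟨by omega, h⟩⟩
      · rintro ⟨h1, h | h⟩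
        · omega
        · exact h.2
    obtain ⟨lam, ⟨p1, bs, p2, p3⟩, ⟨q1, bs', q2, q3⟩⟩ := ih (r - t) (by omega) w1 w1'
      (cnt b w1 hw).2 (cnt b' w1' hw').2 (by
        intro i m k
        rw [sub b w1 i m, sub b w1 m k, sub b w1 i k]
        rintro ⟨h1, h2⟩ ⟨h3, h4⟩
        exact ⟨h1, ht _ _ _ h2 h4⟩) (by
        intro i k
        rw [sub b w1, sub b' w1', hJ])
    refine ⟨t :: lam, ⟨?_, b :: bs, by simp [p2], by simp [← p3]⟩,
      ⟨?_, b' :: bs', by simp [q2], by simp [← q3]⟩⟩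
    · intro x hx
      rcases List.mem_cons.1 hx with rfl | hx
      · exact ht0
      · exact p1 x hx
    · intro x hx
      rcases List.mem_cons.1 hx with rfl | hx
      · exact ht0
      · exact p1 x hx

lemma rk_succ (e : Finset ℕ) (n : ℕ) : rk e (n + 1) = rk e n + if n + 1 ∈ e then 1 else 0 := by
  unfold rk
  split_ifs with h
  · have : e.filter (· ≤ n + 1) = insert (n + 1) (e.filter (· ≤ n)) := by
      ext z
      simp only [Finset.mem_filter, Finset.mem_insert]
      constructor
      · rintro ⟨h1, h2⟩
        rcases h2.lt_or_eq with h3 | h3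
        · exact Or.inr ⟨h1, by omega⟩
        · exact Or.inl h3
      · rintro (rfl | ⟨h1, h2⟩)
        · exact ⟨h, le_rfl⟩
        · exact ⟨h1, by omega⟩
    rw [this, Finset.card_insert_of_notMem (by simp)]
  · rw [add_zero]
    congr 1
    ext z
    simp only [Finset.mem_filter]
    constructor
    · rintro ⟨h1, h2⟩
      refine ⟨h1, ?_⟩
      rcases h2.lt_or_eq with h3 | h3
      · omega
      · subst h3; exact absurd h1 h
    · rintro ⟨h1, h2⟩; exact ⟨h1, by omega⟩

lemma count_word {r : ℕ} {E F : Finset ℕ} (hd : Disjoint E F)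
    (hU : E ∪ F = Finset.Icc 1 (2 * r)) (h1 : 1 ∈ E) (n : ℕ) (hn : n ≤ 2 * r) :
    ((patternWord r {E, F}).take n).count true = rk E n ∧
    ((patternWord r {E, F}).take n).count false = rk F n := by
  have h1F : 1 ∉ F := fun h => Finset.disjoint_left.1 hd h1 h
  have hf : (patternWord r {E, F}) = (List.range (2 * r)).map (fun j => decide (j + 1 ∈ E)) := by
    unfold patternWord
    congr 1
    ext j
    simp [h1, h1F]
  rw [hf]
  have h0 : ∀ x ∈ E ∪ F, 1 ≤ x := by
    intro x hx; rw [hU, Finset.mem_Icc] at hx; exact hx.1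
  rw [← List.map_take, List.take_range, min_eq_left hn]
  induction n with
  | zero =>
    have : rk E 0 = 0 := by
      unfold rk
      rw [Finset.card_eq_zero, Finset.filter_eq_empty_iff]
      intro x hx
      have := h0 x (by simp [hx]); omega
    have : rk F 0 = 0 := by
      unfold rk
      rw [Finset.card_eq_zero, Finset.filter_eq_empty_iff]
      intro x hx
      have := h0 x (by simp [hx]); omega
    simp [*]
  | succ n ih =>
    obtain ⟨A, B⟩ := ih (by omega)
    rw [List.range_succ, List.map_append, List.count_append, List.count_append, A, B, rk_succ, rk_succ]
    have hm : n + 1 ∈ E ∪ F := by rw [hU, Finset.mem_Icc]; omega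
    by_cases hE : n + 1 ∈ E
    · have : n + 1 ∉ F := fun h => Finset.disjoint_left.1 hd hE h
      simp [hE, this]
    · have : n + 1 ∈ F := (Finset.mem_union.1 hm).resolve_left hE
      simp [hE, this]

lemma J_iff_JW {r : ℕ} (hr : 1 ≤ r) {P : Finset (Finset ℕ)} (hP : IsOrderedMatching r 2 P) :
    (∀ i k, J P i k ↔ JW (patternWord r P) i k) ∧ ∀ c, (patternWord r P).count c = r := by
  obtain ⟨E, F, rfl, hne, hE, hF, hd, hU, h1⟩ := exists_edges hr hP
  obtain ⟨a, ha⟩ := exists_enum r E hE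
  obtain ⟨b, hb⟩ := exists_enum r F hF
  have hlen : (patternWord r {E, F}).length = 2 * r := by simp [patternWord]
  have hcw := count_word hd hU h1
  have hbd : ∀ x ∈ E ∪ F, x ≤ 2 * r := by
    intro x hx; rw [hU, Finset.mem_Icc] at hx; exact hx.2
  have hfull : ∀ G ⊆ E ∪ F, rk G (2 * r) = G.card := by
    intro G hG
    unfold rk
    rw [Finset.filter_true_of_mem]
    intro x hx
    exact hbd x (hG hx)
  constructor
  · intro i k
    rw [J_iff ha hb]
    constructor
    · rintro ⟨h2, h3, h4, h5 | h5⟩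
      · have hx : a k ≤ 2 * r := hbd _ (Finset.mem_union_left _ (ha.mem k (by omega) h4))
        refine ⟨h2, h3, true, a k, ?_, ?_⟩
        · rw [(hcw _ hx).1, ha.rk_a _ (by omega) h4]
        · have := hb.le_rk_iff (x := a k) h2 (by omega : i ≤ r)
          rw [Bool.not_true, (hcw _ hx).2]; omega
      · have hx : b k ≤ 2 * r := hbd _ (Finset.mem_union_right _ (hb.mem k (by omega) h4))
        refine ⟨h2, h3, false, b k, ?_, ?_⟩
        · rw [(hcw _ hx).2, hb.rk_a _ (by omega) h4]
        · have := ha.le_rk_iff (x := b k) h2 (by omega : i ≤ r)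
          rw [Bool.not_false, (hcw _ hx).1]; omega
    · rintro ⟨h2, h3, c, n, h4, h5⟩
      obtain ⟨n, hn, h4, h5⟩ : ∃ n, n ≤ 2 * r ∧ k ≤ ((patternWord r {E, F}).take n).count c ∧
          ((patternWord r {E, F}).take n).count (!c) < i := by
        rcases le_total n (2 * r) with h | h
        · exact ⟨n, h, h4, h5⟩
        · rw [List.take_of_length_le (by omega)] at h4 h5
          refine ⟨2 * r, le_rfl, ?_⟩
          rw [List.take_of_length_le (by omega)]
          exact ⟨h4, h5⟩
      obtain ⟨A, B⟩ := hcw n hn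
      have hEr := rk_le E n
      have hFr := rk_le F n
      cases c
      · rw [B] at h4
        rw [Bool.not_false, A] at h5
        have hk : k ≤ r := by omega
        refine ⟨h2, h3, hk, Or.inr ?_⟩
        have u := (hb.le_rk_iff (x := n) (by omega) hk).1 h4
        have v := ha.le_rk_iff (x := n) h2 (by omega : i ≤ r)
        omega
      · rw [A] at h4
        rw [Bool.not_true, B] at h5
        have hk : k ≤ r := by omega
        refine ⟨h2, h3, hk, Or.inl ?_⟩
        have u := (ha.le_rk_iff (x := n) (by omega) hk).1 h4
        have v := hb.le_rk_iff (x := n) h2 (by omega : i ≤ r)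
        omega
  · have := hcw (2 * r) le_rfl
    rw [List.take_of_length_le (by omega), hfull E Finset.subset_union_left,
      hfull F Finset.subset_union_right] at this
    intro c
    cases c
    · rw [this.2, hF]
    · rw [this.1, hE]

lemma mismatch_iff {r : ℕ} (hr : 1 ≤ r) {P Q : Finset (Finset ℕ)} (hP : IsOrderedMatching r 2 P)
    (hQ : IsOrderedMatching r 2 Q) :
    Mismatch r P Q ↔ (∃ i k, ¬ (J P i k ↔ J Q i k)) ∧ (JTrans P ∨ JTrans Q) := by
  have cP : Collectable r P ↔ JTrans P := ⟨trans_of_collectable, collectable_of_trans hr hP⟩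
  have cQ : Collectable r Q ↔ JTrans Q := ⟨trans_of_collectable, collectable_of_trans hr hQ⟩
  obtain ⟨wP, nP⟩ := J_iff_JW hr hP
  obtain ⟨wQ, nQ⟩ := J_iff_JW hr hQ
  unfold Mismatch
  rw [cP, cQ]
  constructor
  · rintro ⟨-, h⟩
    refine ⟨?_, by tauto⟩
    by_contra hcon
    push Not at hcon
    have hPQ : JTrans P ↔ JTrans Q := by
      unfold JTrans
      simp only [hcon]
    rcases h with h | h | ⟨h1, h2, h3⟩
    · tauto
    · tauto
    · apply h3
      refine common_splitting r _ _ nP nQ ?_ ?_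
      · intro i m k
        rw [← wP, ← wP, ← wP]
        exact h1 i m k
      · intro i k
        rw [← wP, ← wQ]
        exact hcon i k
  · rintro ⟨⟨i, k, h⟩, h2⟩
    refine ⟨?_, ?_⟩
    · rintro rfl; exact h Iff.rfl
    · have : ¬ ∃ lam : List ℕ, HasComposition r P lam ∧ HasComposition r Q lam := by
        rintro ⟨lam, h3, h4⟩
        apply h
        rw [wP, wQ]
        exact JW_of_splitting lam _ _ h3 h4 i k
      tauto

end MI

/-- **Observation.** For every `r ≥ 3` and every mismatched pair `{P, Q}` of distinct
`r`-patterns there exists `j ∈ {1, …, r}` such that `{P^(−j), Q^(−j)}` is a mismatched pair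
of distinct `(r−1)`-patterns. -/
theorem mismatch_inheritance (r : ℕ) (hr : 3 ≤ r) (P Q : Finset (Finset ℕ))
    (hP : IsOrderedMatching r 2 P) (hQ : IsOrderedMatching r 2 Q)
    (hmis : Mismatch r P Q) :
    ∃ j ∈ Finset.Icc 1 r,
      IsOrderedMatching (r - 1) 2 (patternDelete j P) ∧
      IsOrderedMatching (r - 1) 2 (patternDelete j Q) ∧
      Mismatch (r - 1) (patternDelete j P) (patternDelete j Q) := by
  have h2 := (MI.mismatch_iff (by omega) hP hQ).1 hmis
  obtain ⟨⟨i, k, hik⟩, ht⟩ := h2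
  obtain ⟨j, hj1, hj2, hji, hjk⟩ : ∃ j, 1 ≤ j ∧ j ≤ r ∧ j ≠ i ∧ j ≠ k := by
    by_cases h1 : 1 ≠ i ∧ 1 ≠ k
    · exact ⟨1, by omega, by omega, h1.1, h1.2⟩
    by_cases h2 : 2 ≠ i ∧ 2 ≠ k
    · exact ⟨2, by omega, by omega, h2.1, h2.2⟩
    · exact ⟨3, by omega, by omega, by omega, by omega⟩
  have mP := MI.matching_delete (by omega) hP hj1 hj2
  have mQ := MI.matching_delete (by omega) hQ hj1 hj2
  refine ⟨j, Finset.mem_Icc.2 ⟨hj1, hj2⟩, mP, mQ, ?_⟩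
  rw [MI.mismatch_iff (by omega) mP mQ]
  have jP := MI.J_patternDelete hP.2.1 hj1 hj2
  have jQ := MI.J_patternDelete hQ.2.1 hj1 hj2
  have inv : ∀ i, j ≠ i → MI.dl j (if i < j then i else i - 1) = i := by
    intro i hi
    unfold MI.dl
    split_ifs <;> omega
  refine ⟨⟨if i < j then i else i - 1, if k < j then k else k - 1, ?_⟩, ?_⟩
  · rw [jP, jQ, inv i hji, inv k hjk]
    exact hik
  · rcases ht with ht | ht
    · left
      intro a b c
      rw [jP, jP, jP]
      exact ht _ _ _
    · right
      intro a b c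
      rw [jQ, jQ, jQ]
      exact ht _ _ _
end

section
/- For every r ≥ 2, every harmonious pair {P, Q} of distinct r-patterns, and every k ≥ 1, the number of {P, Q}-cliques of size k whose edges partition [rk] equals k!. -/
open Finset
open scoped Classical

namespace HCC

/-- Good enumeration of the edges of a matching: edges ordered by minimum, each increasing. -/
structure Good (r k : ℕ) [NeZero r] (y : Fin k → Fin r → ℕ) : Prop where
  mono0 : StrictMono (fun a => y a 0)
  mono : ∀ a, StrictMono (y a)
  inj : ∀ a b i j, y a i = y b j → a = b
  img : ∀ x, (∃ a i, y a i = x) ↔ 1 ≤ x ∧ x ≤ r * k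

/-- The matching associated with an enumeration. -/
noncomputable def edges {r k : ℕ} (y : Fin k → Fin r → ℕ) : Finset (Finset ℕ) :=
  univ.image (fun a => univ.image (y a))

lemma mem_edges {r k : ℕ} (y : Fin k → Fin r → ℕ) (e : Finset ℕ) :
    e ∈ edges y ↔ ∃ a, univ.image (y a) = e := by
  simp [edges]

lemma disj_of {r k : ℕ} (y : Fin k → Fin r → ℕ)
    (inj : ∀ a b i j, y a i = y b j → a = b) {a b : Fin k} (hab : a ≠ b) :
    Disjoint (univ.image (y a)) (univ.image (y b)) := by
  rw [Finset.disjoint_left]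
  intro x hx hx'
  simp only [mem_image, mem_univ, true_and] at hx hx'
  obtain ⟨i, rfl⟩ := hx
  obtain ⟨j, hj⟩ := hx'
  exact hab (inj _ _ _ _ hj.symm)

lemma Good.matching {r k : ℕ} [NeZero r] {y : Fin k → Fin r → ℕ} (h : Good r k y) :
    IsOrderedMatching r k (edges y) := by
  refine ⟨?_, ?_, ?_, ?_⟩
  · rw [edges, card_image_of_injective]
    · simp
    · intro a b hab
      have h1 : y a 0 ∈ univ.image (y b) := by
        have : univ.image (y a) = univ.image (y b) := hab
        rw [← this]; simp
      simp only [mem_image, mem_univ, true_and] at h1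
      obtain ⟨j, hj⟩ := h1
      exact (h.inj _ _ _ _ hj).symm
  · intro e he
    rw [mem_edges] at he
    obtain ⟨a, rfl⟩ := he
    rw [card_image_of_injective _ (h.mono a).injective]; simp
  · intro e he f hf hne
    rw [mem_edges] at he hf
    obtain ⟨a, rfl⟩ := he
    obtain ⟨b, rfl⟩ := hf
    exact disj_of y h.inj (fun hab => hne (by rw [hab]))
  · ext x
    simp only [mem_biUnion, mem_edges, mem_Icc, ← h.img x, id]
    constructor
    · rintro ⟨e, ⟨a, rfl⟩, hx⟩
      simp only [mem_image, mem_univ, true_and] at hx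
      exact ⟨a, hx⟩
    · rintro ⟨a, i, hx⟩
      exact ⟨_, ⟨a, rfl⟩, by simp only [mem_image, mem_univ, true_and]; exact ⟨i, hx⟩⟩

lemma edges_inj {r k : ℕ} [NeZero r] {y z : Fin k → Fin r → ℕ}
    (hy0 : StrictMono (fun a => y a 0)) (hz0 : StrictMono (fun a => z a 0))
    (hy : ∀ a, StrictMono (y a)) (hz : ∀ a, StrictMono (z a)) (h : edges y = edges z) :
    y = z := by
  have key : ∀ {y z : Fin k → Fin r → ℕ}, (∀ a, StrictMono (y a)) → (∀ a, StrictMono (z a)) →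
      edges y = edges z → ∀ a, ∃ b, y a = z b := by
    intro y z hy hz h a
    have : univ.image (y a) ∈ edges z := by rw [← h, mem_edges]; exact ⟨a, rfl⟩
    rw [mem_edges] at this
    obtain ⟨b, hb⟩ := this
    refine ⟨b, ?_⟩
    rw [← StrictMono.range_inj (hy a) (hz b)]
    have := congrArg (fun s : Finset ℕ => (s : Set ℕ)) hb
    simpa using this.symm
  have h0 : (fun a => y a 0) = (fun a => z a 0) := by
    rw [← StrictMono.range_inj hy0 hz0]
    ext x
    simp only [Set.mem_range]
    constructor
    · rintro ⟨a, rfl⟩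
      obtain ⟨b, hb⟩ := key hy hz h a
      exact ⟨b, by rw [hb]⟩
    · rintro ⟨a, rfl⟩
      obtain ⟨b, hb⟩ := key hz hy h.symm a
      exact ⟨b, by rw [hb]⟩
  funext a
  obtain ⟨b, hb⟩ := key hy hz h a
  have h1 : z b 0 = z a 0 := by
    rw [← hb]; exact congrFun h0 a
  rw [hb, hz0.injective h1]

lemma exists_good {r k : ℕ} [NeZero r] {M : Finset (Finset ℕ)} (h : IsOrderedMatching r k M) :
    ∃ y, Good r k y ∧ edges y = M := by
  obtain ⟨hc, hr, hd, hu⟩ := h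
  have hne : ∀ e ∈ M, e.Nonempty := by
    intro e he
    rw [← card_pos, hr e he]; exact Nat.pos_of_ne_zero (NeZero.ne r)
  let mn : Finset ℕ → ℕ := fun e => if he : e.Nonempty then e.min' he else 0
  have hmn : ∀ e ∈ M, mn e ∈ e := by
    intro e he
    simp only [mn, dif_pos (hne e he)]; exact min'_mem _ _
  have hinj : Set.InjOn mn (M : Set (Finset ℕ)) := by
    intro e he f hf hef
    by_contra hne'
    have := hd e he f hf hne'
    rw [Finset.disjoint_left] at this
    exact this (hmn e he) (by rw [hef]; exact hmn f hf)
  have hS : (M.image mn).card = k := by rw [card_image_of_injOn hinj, hc]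
  have hex : ∀ a : Fin k, ∃ e, e ∈ M ∧ mn e = (M.image mn).orderEmbOfFin hS a := by
    intro a
    exact mem_image.1 ((M.image mn).orderEmbOfFin_mem hS a)
  choose E hE hmE using hex
  have hEsurj : ∀ e ∈ M, ∃ a, E a = e := by
    intro e he
    have : mn e ∈ Set.range ((M.image mn).orderEmbOfFin hS) := by
      rw [range_orderEmbOfFin]; exact mem_coe.2 (mem_image_of_mem mn he)
    obtain ⟨a, ha⟩ := this
    exact ⟨a, hinj (hE a) he (by rw [hmE, ha])⟩
  let y : Fin k → Fin r → ℕ := fun a => (E a).orderEmbOfFin (hr _ (hE a))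
  have himg : ∀ a, univ.image (y a) = E a := by
    intro a
    ext x
    have := Set.ext_iff.1 (range_orderEmbOfFin (E a) (hr _ (hE a))) x
    simpa [y] using this
  have hEinj : Function.Injective E := by
    intro a b hab
    have : (M.image mn).orderEmbOfFin hS a = (M.image mn).orderEmbOfFin hS b := by
      rw [← hmE, ← hmE, hab]
    exact ((M.image mn).orderEmbOfFin hS).strictMono.injective this
  have hy0 : ∀ a, y a 0 = mn (E a) := by
    intro a
    have : (0 : Fin r) = ⟨0, Nat.pos_of_ne_zero (NeZero.ne r)⟩ := rfl
    simp only [y, this, orderEmbOfFin_zero, mn, dif_pos (hne _ (hE a))]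
  have hmem : ∀ a i, y a i ∈ E a := fun a i => orderEmbOfFin_mem _ _ _
  refine ⟨y, ⟨?_, ?_, ?_, ?_⟩, ?_⟩
  · intro a b hab
    simp only [hy0, hmE]
    exact (OrderEmbedding.strictMono _) hab
  · intro a; exact OrderEmbedding.strictMono _
  · intro a b i j hij
    by_contra hab
    have := hd _ (hE a) _ (hE b) (fun h => hab (hEinj h))
    rw [Finset.disjoint_left] at this
    exact this (hmem a i) (by rw [hij]; exact hmem b j)
  · intro x
    rw [← mem_Icc, ← hu, mem_biUnion]
    constructor
    · rintro ⟨a, i, rfl⟩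
      exact ⟨E a, hE a, hmem a i⟩
    · rintro ⟨e, he, hx⟩
      obtain ⟨a, rfl⟩ := hEsurj e he
      simp only [id, ← himg a, mem_image, mem_univ, true_and] at hx
      exact ⟨a, hx⟩
  · ext e
    rw [mem_edges]
    constructor
    · rintro ⟨a, rfl⟩
      rw [himg]; exact hE a
    · intro he
      obtain ⟨a, rfl⟩ := hEsurj e he
      exact ⟨a, himg a⟩

lemma forms_symm {r : ℕ} {e f : Finset ℕ} {P} (h : FormsPattern r e f P) :
    FormsPattern r f e P := by
  obtain ⟨φ, h1, h2, h3⟩ := h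
  exact ⟨φ, by rwa [union_comm], by rwa [union_comm], by rwa [pair_comm]⟩

lemma edges_two {r : ℕ} (u : Fin 2 → Fin r → ℕ) :
    edges u = {univ.image (u 0), univ.image (u 1)} := by
  ext e
  rw [mem_edges, Fin.exists_fin_two]
  simp [eq_comm]

lemma forms_iff {r : ℕ} [NeZero r] {p : Fin 2 → Fin r → ℕ} (hp : Good r 2 p)
    {u v : Fin r → ℕ} (hu : StrictMono u) (hv : StrictMono v) (h0 : u 0 < v 0)
    (hne : ∀ i j, u i ≠ v j) :
    FormsPattern r (univ.image u) (univ.image v) (edges p) ↔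
      ∀ i j, u i < v j ↔ p 0 i < p 1 j := by
  have hpu : ∀ i j, p 0 i ≠ p 1 j := by
    intro i j h
    exact absurd (hp.inj _ _ _ _ h) (by decide)
  constructor
  · rintro ⟨φ, h1, -, h3⟩
    have mu : ∀ i, u i ∈ ((univ.image u ∪ univ.image v : Finset ℕ) : Set ℕ) := by
      intro i; simp
    have mv : ∀ i, v i ∈ ((univ.image u ∪ univ.image v : Finset ℕ) : Set ℕ) := by
      intro i; simp
    let q : Fin 2 → Fin r → ℕ := ![φ ∘ u, φ ∘ v]
    have hq : edges q = edges p := by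
      rw [edges_two, ← h3]
      simp only [q, image_image]
      rfl
    have : q = p := by
      refine edges_inj ?_ hp.mono0 ?_ hp.mono hq
      · intro a b hab
        have ha : a = 0 := by omega
        have hb : b = 1 := by omega
        subst ha hb
        exact h1 (mu 0) (mv 0) h0
      · intro a
        fin_cases a
        · exact fun i j hij => h1 (mu i) (mu j) (hu hij)
        · exact fun i j hij => h1 (mv i) (mv j) (hv hij)
    intro i j
    rw [← this]
    exact (h1.lt_iff_lt (mu i) (mv j)).symm
  · intro h
    let Y : Fin r ⊕ Fin r → ℕ := Sum.elim u v
    let Z : Fin r ⊕ Fin r → ℕ := Sum.elim (p 0) (p 1)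
    have hY : Function.Injective Y :=
      Function.Injective.sumElim hu.injective hv.injective hne
    let φ : ℕ → ℕ := Function.extend Y Z 0
    have hφ : ∀ z, φ (Y z) = Z z := fun z => hY.extend_apply _ _ _
    have hφu : ∀ i, φ (u i) = p 0 i := fun i => hφ (Sum.inl i)
    have hφv : ∀ i, φ (v i) = p 1 i := fun i => hφ (Sum.inr i)
    have iu : (univ.image u).image φ = univ.image (p 0) := by
      rw [image_image]; congr 1; funext i; exact hφu i
    have iv : (univ.image v).image φ = univ.image (p 1) := by
      rw [image_image]; congr 1; funext i; exact hφv i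
    refine ⟨φ, ?_, ?_, ?_⟩
    · intro x hx x' hx' hlt
      simp only [coe_union, coe_image, coe_univ, Set.image_univ, Set.mem_union,
        Set.mem_range] at hx hx'
      rcases hx with ⟨i, rfl⟩ | ⟨i, rfl⟩ <;> rcases hx' with ⟨j, rfl⟩ | ⟨j, rfl⟩
      · rw [hφu, hφu]; exact hp.mono 0 (hu.lt_iff_lt.1 hlt)
      · rw [hφu, hφv]; exact (h i j).1 hlt
      · rw [hφu, hφv]
        have : ¬ p 0 j < p 1 i := fun h' => absurd ((h j i).2 h') (by omega)
        have := hpu j i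
        omega
      · rw [hφv, hφv]; exact hp.mono 1 (hv.lt_iff_lt.1 hlt)
    · rw [image_union, iu, iv]
      ext x
      rw [mem_Icc, mul_comm, ← hp.img x, Fin.exists_fin_two]
      simp
    · rw [iu, iv, edges_two]

/-- Block index of the `i`-th vertex of an edge. -/
def lev : List ℕ → ℕ → ℕ
  | [], _ => 0
  | t :: ts, i => if i < t then 0 else lev ts (i - t) + 1

lemma lev_mono (lam : List ℕ) : Monotone (lev lam) := by
  induction lam with
  | nil => intro i j _; simp [lev]
  | cons t ts ih =>
    intro i j hij
    simp only [lev]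
    split_ifs
    · simp
    · simp
    · omega
    · have := ih (show i - t ≤ j - t by omega)
      omega

/-- The word with given block lengths and block signs. -/
def wd (lam : List ℕ) (bs : List Bool) : List Bool :=
  (List.zipWith (fun t b => List.replicate t b ++ List.replicate t !b) lam bs).flatten

lemma count_block (t : ℕ) (b c : Bool) :
    (List.replicate t b ++ List.replicate t !b).count c = t := by
  cases b <;> cases c <;> simp [List.count_replicate]

lemma word_in (t : ℕ) (b c : Bool) (w : List Bool) (x : ℕ) (hx : x < 2 * t)
    (h : ((List.replicate t b ++ List.replicate t !b) ++ w)[x]? = some c) :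
    (((List.replicate t b ++ List.replicate t !b) ++ w).take x).count c < t ∧
      (x < t ↔ b = c) := by
  have hlen : (List.replicate t b ++ List.replicate t !b).length = 2 * t := by simp; omega
  rw [List.getElem?_append_left (by omega)] at h
  rw [List.take_append_of_le_length (by omega)]
  by_cases hxt : x < t
  · rw [List.getElem?_append_left (by simpa using hxt)] at h
    have hb : b = c := by simpa [List.getElem?_replicate, hxt] using h
    rw [List.take_append_of_le_length (by simpa using hxt.le)]
    subst hb
    simp [List.take_replicate, hxt]
  · rw [List.getElem?_append_right (by simpa using hxt)] at h
    have hb : (!b) = c := by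
      rw [List.length_replicate, List.getElem?_replicate, if_pos (by omega)] at h
      simpa using h
    subst hb
    rw [List.take_append]
    cases b <;> simp [List.take_replicate, List.count_replicate] <;> omega

lemma word_out (t : ℕ) (b c : Bool) (w : List Bool) (x : ℕ) (hx : 2 * t ≤ x)
    (h : ((List.replicate t b ++ List.replicate t !b) ++ w)[x]? = some c) :
    (((List.replicate t b ++ List.replicate t !b) ++ w).take x).count c
      = t + (w.take (x - 2 * t)).count c ∧ w[x - 2 * t]? = some c := by
  have hlen : (List.replicate t b ++ List.replicate t !b).length = 2 * t := by simp; omega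
  rw [List.getElem?_append_right (by omega), hlen] at h
  refine ⟨?_, h⟩
  rw [List.take_append, List.count_append, hlen, List.take_of_length_le (by omega), count_block]

lemma word_main (lam : List ℕ) : ∀ (bs : List Bool), bs.length = lam.length → ∀ x y : ℕ,
    (wd lam bs)[x]? = some true → (wd lam bs)[y]? = some false →
    (x < y ↔ lev lam (((wd lam bs).take x).count true) < lev lam (((wd lam bs).take y).count false)
      ∨ (lev lam (((wd lam bs).take x).count true) = lev lam (((wd lam bs).take y).count false)
        ∧ bs.getD (lev lam (((wd lam bs).take x).count true)) true = true)) := by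
  induction lam with
  | nil => intro bs _ x y h; simp [wd] at h
  | cons t ts ih =>
    intro bs hbs x y hx hy
    cases bs with
    | nil => simp at hbs
    | cons b bs =>
      have hw : wd (t :: ts) (b :: bs) =
        (List.replicate t b ++ List.replicate t !b) ++ wd ts bs := by simp [wd]
      rw [hw] at hx hy ⊢
      have ih' := ih bs (by simpa using hbs)
      by_cases h1 : x < 2 * t <;> by_cases h2 : y < 2 * t
      · obtain ⟨a1, a2⟩ := word_in _ _ _ _ _ h1 hx
        obtain ⟨b1, b2⟩ := word_in _ _ _ _ _ h2 hy
        simp only [lev, if_pos a1, if_pos b1]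
        cases b <;> simp at a2 b2 ⊢ <;> omega
      · obtain ⟨a1, a2⟩ := word_in _ _ _ _ _ h1 hx
        obtain ⟨b1, b2⟩ := word_out _ _ _ _ _ (by omega) hy
        rw [b1]
        simp only [lev, if_pos a1]
        rw [if_neg (by omega)]
        constructor
        · intro; left; omega
        · intro; omega
      · obtain ⟨a1, a2⟩ := word_out _ _ _ _ _ (by omega) hx
        obtain ⟨b1, b2⟩ := word_in _ _ _ _ _ h2 hy
        rw [a1]
        simp only [lev, if_pos b1]
        rw [if_neg (by omega)]
        constructor
        · intro; omega
        · rintro (h | ⟨h, -⟩) <;> omega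
      · obtain ⟨a1, a2⟩ := word_out _ _ _ _ _ (by omega) hx
        obtain ⟨b1, b2⟩ := word_out _ _ _ _ _ (by omega) hy
        rw [a1, b1]
        simp only [lev]
        rw [if_neg (by omega), if_neg (by omega), Nat.add_sub_cancel_left,
          Nat.add_sub_cancel_left, List.getD_cons_succ]
        have := ih' _ _ a2 b2
        rw [show x < y ↔ x - 2 * t < y - 2 * t by omega, this]
        simp only [Nat.add_lt_add_iff_right, Nat.add_right_cancel_iff]

lemma count_map_range (f : ℕ → Bool) (c : Bool) (n x : ℕ) (hx : x ≤ n) :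
    (((List.range n).map f).take x).count c = ((range x).filter (fun z => f z = c)).card := by
  rw [← List.map_take, List.take_range, min_eq_left hx]
  induction x with
  | zero => simp
  | succ m ih =>
    rw [List.range_succ, List.map_append, List.count_append, ih (by omega), range_add_one,
      filter_insert]
    by_cases h : f m = c
    · rw [if_pos h, card_insert_of_notMem (by simp)]; simp [h]
    · rw [if_neg h]; simp [h]

lemma card_rank {r : ℕ} {u : Fin r → ℕ} (hu : StrictMono u) (h1 : ∀ i, 1 ≤ u i) (i : Fin r)
    (S : ℕ → Prop) [DecidablePred S] (hS : ∀ z, S z ↔ ∃ j, u j = z + 1) :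
    ((range (u i - 1)).filter S).card = i := by
  have : (range (u i - 1)).filter S = (univ.filter (fun j : Fin r => j < i)).image
      (fun j => u j - 1) := by
    ext z
    simp only [mem_filter, mem_range, hS, mem_image, mem_univ, true_and]
    constructor
    · rintro ⟨hz, j, hj⟩
      exact ⟨j, hu.lt_iff_lt.1 (by omega), by omega⟩
    · rintro ⟨j, hj, rfl⟩
      have := hu hj
      have := h1 j
      exact ⟨by omega, j, by omega⟩
  rw [this, card_image_of_injective]
  · have : (univ.filter (fun j : Fin r => j < i)) = Iio i := by ext; simp
    rw [this, Fin.card_Iio]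
  · intro a b hab
    have := h1 a
    have := h1 b
    have hab : u a - 1 = u b - 1 := hab
    exact hu.injective (by omega)

lemma composition {r : ℕ} [NeZero r] {p : Fin 2 → Fin r → ℕ} (hp : Good r 2 p) {lam : List ℕ}
    (h : HasComposition r (edges p) lam) :
    ∃ s : ℕ → Bool, ∀ i j : Fin r, p 0 i < p 1 j ↔
      lev lam i < lev lam j ∨ (lev lam i = lev lam j ∧ s (lev lam i) = true) := by
  obtain ⟨-, bs, hlen, hw⟩ := h
  have hw : patternWord r (edges p) = wd lam bs := hw
  refine ⟨fun l => bs.getD l true, fun i j => ?_⟩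
  have hb : ∀ a i, 1 ≤ p a i ∧ p a i ≤ r * 2 := fun a i => (hp.img _).1 ⟨a, i, rfl⟩
  have hone : p 0 0 = 1 := by
    have hr := Nat.pos_of_ne_zero (NeZero.ne r)
    obtain ⟨a, i, hai⟩ := (hp.img 1).2 ⟨le_refl _, by omega⟩
    have h1 : p a 0 ≤ p a i := (hp.mono a).monotone (Fin.zero_le i)
    have h2 : p 0 0 ≤ p a 0 := hp.mono0.monotone (Fin.zero_le a)
    have := (hb 0 0).1
    omega
  have hmem : ∀ z, (∃ e ∈ edges p, 1 ∈ e ∧ z + 1 ∈ e) ↔ ∃ i, p 0 i = z + 1 := by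
    intro z
    constructor
    · rintro ⟨e, he, h1, hz⟩
      rw [mem_edges] at he
      obtain ⟨a, rfl⟩ := he
      simp only [mem_image, mem_univ, true_and] at h1 hz
      obtain ⟨i, hi⟩ := h1
      have : a = 0 := hp.inj a 0 i 0 (by rw [hi, hone])
      subst this
      exact hz
    · rintro ⟨i, hi⟩
      refine ⟨univ.image (p 0), (mem_edges _ _).2 ⟨0, rfl⟩, ?_, ?_⟩
      · simp only [mem_image, mem_univ, true_and]; exact ⟨0, hone⟩
      · simp only [mem_image, mem_univ, true_and]; exact ⟨i, hi⟩
  have hmem1 : ∀ z, z < 2 * r → ((¬ ∃ e ∈ edges p, 1 ∈ e ∧ z + 1 ∈ e) ↔ ∃ i, p 1 i = z + 1) := by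
    intro z hz
    rw [hmem]
    obtain ⟨a, i, hai⟩ := (hp.img (z + 1)).2 ⟨by omega, by omega⟩
    constructor
    · intro h
      have : a = 1 := by
        by_contra hne
        have : a = 0 := by omega
        subst this
        exact h ⟨i, hai⟩
      subst this
      exact ⟨i, hai⟩
    · rintro ⟨j, hj⟩ ⟨i', hi'⟩
      have := hp.inj 0 1 i' j (by omega)
      exact absurd this (by decide)
  have hx := hb 0 i
  have hy := hb 1 j
  have g1 : (patternWord r (edges p))[p 0 i - 1]? = some true := by
    rw [patternWord, List.getElem?_map, List.getElem?_range (by omega)]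
    simp only [Option.map_some, Option.some.injEq, decide_eq_true_eq]
    rw [hmem]
    exact ⟨i, by omega⟩
  have g2 : (patternWord r (edges p))[p 1 j - 1]? = some false := by
    rw [patternWord, List.getElem?_map, List.getElem?_range (by omega)]
    simp only [Option.map_some, Option.some.injEq, decide_eq_false_iff_not]
    rw [hmem1 _ (by omega)]
    exact ⟨j, by omega⟩
  have c1 : ((patternWord r (edges p)).take (p 0 i - 1)).count true = i := by
    rw [patternWord, count_map_range _ _ _ _ (by omega)]
    refine card_rank (hp.mono 0) (fun i => (hb 0 i).1) i _ ?_
    intro z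
    rw [decide_eq_true_eq, hmem]
  have c2 : ((patternWord r (edges p)).take (p 1 j - 1)).count false = j := by
    rw [patternWord, count_map_range _ _ _ _ (by omega)]
    rw [← card_rank (hp.mono 1) (fun i => (hb 1 i).1) j (fun z => ∃ j, p 1 j = z + 1)
      (fun z => Iff.rfl)]
    congr 1
    ext z
    rw [mem_filter, mem_filter]
    refine and_congr_right fun hz => ?_
    rw [mem_range] at hz
    rw [decide_eq_false_iff_not, hmem1 _ (by omega)]
  rw [hw] at g1 g2 c1 c2
  have := word_main lam bs hlen _ _ g1 g2
  rw [c1, c2] at this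
  rw [← this]
  omega

/-- Position of edge `a` within level `l`. -/
def pos {k : ℕ} (s t : ℕ → Bool) (σ : Equiv.Perm (Fin k)) (l : ℕ) (a : Fin k) : ℤ :=
  if s l then (if t l then (a : ℤ) else (σ a : ℤ)) else (if t l then -(σ a : ℤ) else -(a : ℤ))

/-- Sorting key. -/
def key {k r : ℕ} (L : ℕ → ℕ) (s t : ℕ → Bool) (σ : Equiv.Perm (Fin k)) (z : Fin k × Fin r) :
    ℕ ×ₗ ℤ ×ₗ ℕ :=
  toLex (L z.2, toLex (pos s t σ (L z.2) z.1, (z.2 : ℕ)))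

lemma pos_inj {k : ℕ} (s t : ℕ → Bool) (σ : Equiv.Perm (Fin k)) (l : ℕ) {a b : Fin k}
    (h : pos s t σ l a = pos s t σ l b) : a = b := by
  unfold pos at h
  split_ifs at h
  · omega
  · exact σ.injective (by omega)
  · exact σ.injective (by omega)
  · omega

lemma key_lt {k r : ℕ} (L : ℕ → ℕ) (s t : ℕ → Bool) (σ : Equiv.Perm (Fin k))
    (z w : Fin k × Fin r) : key L s t σ z < key L s t σ w ↔
      L z.2 < L w.2 ∨ (L z.2 = L w.2 ∧ (pos s t σ (L z.2) z.1 < pos s t σ (L w.2) w.1 ∨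
        (pos s t σ (L z.2) z.1 = pos s t σ (L w.2) w.1 ∧ z.2 < w.2))) := by
  simp only [key, Prod.Lex.toLex_lt_toLex, Fin.lt_def]

lemma key_inj {k r : ℕ} (L : ℕ → ℕ) (s t : ℕ → Bool) (σ : Equiv.Perm (Fin k)) :
    Function.Injective (key (r := r) L s t σ) := by
  intro z w h
  simp only [key, toLex_inj, Prod.mk.injEq] at h
  obtain ⟨h1, h2, h3⟩ := h
  rw [h1] at h2
  exact Prod.ext (pos_inj _ _ _ _ h2) (Fin.ext h3)

lemma key_lt_P {k r : ℕ} (L : ℕ → ℕ) (s t : ℕ → Bool) (σ : Equiv.Perm (Fin k))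
    {a b : Fin k} (hab : a < b) (hσ : σ a < σ b) (i j : Fin r) :
    key L s t σ (a, i) < key L s t σ (b, j) ↔ L i < L j ∨ (L i = L j ∧ s (L i) = true) := by
  rw [key_lt]
  refine or_congr Iff.rfl (and_congr_right fun h => ?_)
  simp only at h ⊢
  rw [← h]
  unfold pos
  split_ifs <;> simp_all <;> omega

lemma key_lt_Q {k r : ℕ} (L : ℕ → ℕ) (s t : ℕ → Bool) (σ : Equiv.Perm (Fin k))
    {a b : Fin k} (hab : a < b) (hσ : σ b < σ a) (i j : Fin r) :
    key L s t σ (a, i) < key L s t σ (b, j) ↔ L i < L j ∨ (L i = L j ∧ t (L i) = true) := by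
  rw [key_lt]
  refine or_congr Iff.rfl (and_congr_right fun h => ?_)
  simp only at h ⊢
  rw [← h]
  unfold pos
  split_ifs <;> simp_all <;> omega

/-- The enumeration of the matching built from a key order. -/
noncomputable def rk {k r : ℕ} {α : Type} [LinearOrder α] (κ : Fin k × Fin r → α) (a : Fin k)
    (i : Fin r) : ℕ :=
  (univ.filter (fun z => κ z ≤ κ (a, i))).card

lemma rk_lt {k r : ℕ} {α : Type} [LinearOrder α] (κ : Fin k × Fin r → α)
    (a b : Fin k) (i j : Fin r) : rk κ a i < rk κ b j ↔ κ (a, i) < κ (b, j) := by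
  have hle : ∀ a b i j, κ (a, i) ≤ κ (b, j) → rk κ a i ≤ rk κ b j := by
    intro a b i j h
    apply card_le_card
    intro z
    simp only [mem_filter, mem_univ, true_and]
    exact fun h' => h'.trans h
  constructor
  · intro h
    by_contra hn
    exact absurd (hle _ _ _ _ (not_lt.1 hn)) (by omega)
  · intro h
    apply card_lt_card
    rw [ssubset_iff_of_subset]
    · exact ⟨(b, j), by simp, by simpa using h⟩
    · intro z
      simp only [mem_filter, mem_univ, true_and]
      exact fun h' => h'.trans h.le

lemma rk_img {k r : ℕ} {α : Type} [LinearOrder α] (κ : Fin k × Fin r → α)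
    (hκ : Function.Injective κ) (x : ℕ) : (∃ a i, rk κ a i = x) ↔ 1 ≤ x ∧ x ≤ r * k := by
  have hinj : Function.Injective (fun z : Fin k × Fin r => rk κ z.1 z.2) := by
    intro z w h
    have h : rk κ z.1 z.2 = rk κ w.1 w.2 := h
    have h1 := rk_lt κ z.1 w.1 z.2 w.2
    have h2 := rk_lt κ w.1 z.1 w.2 z.2
    rw [h] at h1 h2
    simp only [lt_self_iff_false, false_iff, not_lt] at h1 h2
    exact hκ (le_antisymm h2 h1)
  have : univ.image (fun z : Fin k × Fin r => rk κ z.1 z.2) = Icc 1 (r * k) := by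
    apply eq_of_subset_of_card_le
    · intro x hx
      simp only [mem_image, mem_univ, true_and] at hx
      obtain ⟨z, rfl⟩ := hx
      rw [mem_Icc]
      constructor
      · apply card_pos.2
        exact ⟨z, by simp⟩
      · refine (card_le_univ _).trans ?_
        simp [mul_comm]
    · rw [card_image_of_injective _ hinj]
      simp [mul_comm]
  rw [← mem_Icc, ← this]
  simp

lemma eq_rk {k r : ℕ} [NeZero r] {α : Type} [LinearOrder α] (κ : Fin k × Fin r → α)
    (hκ : Function.Injective κ) {y : Fin k → Fin r → ℕ} (hy : Good r k y)
    (h : ∀ a b i j, κ (a, i) < κ (b, j) → y a i < y b j) : y = rk κ := by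
  have hinj : Function.Injective (fun z : Fin k × Fin r => y z.1 z.2) := by
    rintro ⟨a, i⟩ ⟨b, j⟩ hz
    have hz : y a i = y b j := hz
    have := hy.inj _ _ _ _ hz
    subst this
    rw [(hy.mono a).injective hz]
  have hle : ∀ a b i j, κ (a, i) ≤ κ (b, j) ↔ y a i ≤ y b j := by
    intro a b i j
    constructor
    · intro hh
      rcases hh.lt_or_eq with h' | h'
      · exact (h _ _ _ _ h').le
      · obtain ⟨rfl, rfl⟩ := Prod.mk.inj (hκ h')
        exact le_refl _
    · intro hh
      by_contra hn
      exact absurd (h _ _ _ _ (not_le.1 hn)) (by omega)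
  funext a i
  rw [rk]
  have : (univ.filter (fun z => κ z ≤ κ (a, i))).image (fun z : Fin k × Fin r => y z.1 z.2)
      = Icc 1 (y a i) := by
    ext x
    simp only [mem_image, mem_filter, mem_univ, true_and, mem_Icc, Prod.exists, hle]
    constructor
    · rintro ⟨b, j, h1, rfl⟩
      exact ⟨((hy.img _).1 ⟨b, j, rfl⟩).1, h1⟩
    · rintro ⟨h1, h2⟩
      obtain ⟨b, j, rfl⟩ := (hy.img x).2 ⟨h1, h2.trans ((hy.img _).1 ⟨a, i, rfl⟩).2⟩
      exact ⟨b, j, h2, rfl⟩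
  have h2 := congrArg Finset.card this
  rw [card_image_of_injective _ hinj, Nat.card_Icc] at h2
  omega

lemma key_mono {k r : ℕ} {L : ℕ → ℕ} (hL : Monotone L) (s t : ℕ → Bool) (σ : Equiv.Perm (Fin k))
    (a : Fin k) (i j : Fin r) : key L s t σ (a, i) < key L s t σ (a, j) ↔ i < j := by
  rw [key_lt]
  constructor
  · rintro (h | ⟨h1, h | ⟨-, h⟩⟩)
    · by_contra hn
      exact absurd (hL (show (j : ℕ) ≤ i from not_lt.1 hn)) (by simpa using h)
    · simp only at h h1
      rw [h1] at h
      exact absurd h (lt_irrefl _)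
    · exact h
  · intro h
    rcases (hL (show (i : ℕ) ≤ j from h.le)).lt_or_eq with h' | h'
    · exact Or.inl h'
    · exact Or.inr ⟨h', Or.inr ⟨by simp only; rw [h'], h⟩⟩

lemma exists_perm {k : ℕ} (g : Fin k → ℕ) (hg : Function.Injective g) :
    ∃ σ : Equiv.Perm (Fin k), ∀ a b, σ a < σ b ↔ g a < g b := by
  have hm : StrictMono (g ∘ Tuple.sort g) :=
    (Tuple.monotone_sort g).strictMono_of_injective (hg.comp (Equiv.injective _))
  refine ⟨(Tuple.sort g)⁻¹, fun a b => ?_⟩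
  rw [← hm.lt_iff_lt]
  simp

lemma perm_ext {k : ℕ} {σ τ : Equiv.Perm (Fin k)} (h : ∀ a b, σ a < σ b ↔ τ a < τ b) : σ = τ := by
  have hm : StrictMono (fun a => σ (τ.symm a)) := by
    intro a b hab
    show σ (τ.symm a) < σ (τ.symm b)
    rw [h]; simpa using hab
  have h2 : (fun a => σ (τ.symm a)) = id := by
    rw [← StrictMono.range_inj hm strictMono_id]
    rw [Set.range_id]
    exact Set.range_eq_univ.2 (σ.surjective.comp τ.symm.surjective)
  ext a
  have := congrFun h2 (τ a)
  simp only [Equiv.symm_apply_apply, id] at this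
  rw [this]

lemma core {r : ℕ} [NeZero r] {p q : Fin 2 → Fin r → ℕ} (hp : Good r 2 p) (hq : Good r 2 q)
    {L : ℕ → ℕ} (hL : Monotone L) {s t : ℕ → Bool}
    (hs : ∀ i j : Fin r, p 0 i < p 1 j ↔ L i < L j ∨ (L i = L j ∧ s (L i) = true))
    (ht : ∀ i j : Fin r, q 0 i < q 1 j ↔ L i < L j ∨ (L i = L j ∧ t (L i) = true))
    (i₀ : Fin r) (h1 : s (L i₀) = true) (h2 : t (L i₀) = false) (k : ℕ) :
    cliqueCount r {edges p, edges q} k = k.factorial := by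
  have hs0 : s (L (0 : Fin r)) = true := by
    simpa using (hs 0 0).1 (hp.mono0 (by decide : (0 : Fin 2) < 1))
  have ht0 : t (L (0 : Fin r)) = true := by
    simpa using (ht 0 0).1 (hq.mono0 (by decide : (0 : Fin 2) < 1))
  let Y : Equiv.Perm (Fin k) → Fin k → Fin r → ℕ := fun σ => rk (key L s t σ)
  have hYP : ∀ σ a b i j, a < b → σ a < σ b → (Y σ a i < Y σ b j ↔ p 0 i < p 1 j) := by
    intro σ a b i j hab hσ
    rw [hs, rk_lt, key_lt_P L s t σ hab hσ]
  have hYQ : ∀ σ a b i j, a < b → σ b < σ a → (Y σ a i < Y σ b j ↔ q 0 i < q 1 j) := by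
    intro σ a b i j hab hσ
    rw [ht, rk_lt, key_lt_Q L s t σ hab hσ]
  have hσne : ∀ (σ : Equiv.Perm (Fin k)) {a b}, a < b → σ a < σ b ∨ σ b < σ a := by
    intro σ a b hab
    exact lt_or_gt_of_ne (fun h => hab.ne (σ.injective h))
  have hgood : ∀ σ, Good r k (Y σ) := by
    intro σ
    refine ⟨?_, ?_, ?_, ?_⟩
    · intro a b hab
      rcases hσne σ hab with h | h
      · exact (hYP σ a b 0 0 hab h).2 (hp.mono0 (by decide : (0 : Fin 2) < 1))
      · exact (hYQ σ a b 0 0 hab h).2 (hq.mono0 (by decide : (0 : Fin 2) < 1))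
    · intro a i j hij
      exact (rk_lt _ _ _ _ _).2 ((key_mono hL s t σ a i j).2 hij)
    · intro a b i j h
      have h1 := rk_lt (key L s t σ) a b i j
      have h2 := rk_lt (key L s t σ) b a j i
      have h : rk (key L s t σ) a i = rk (key L s t σ) b j := h
      rw [h] at h1 h2
      simp only [lt_self_iff_false, false_iff, not_lt] at h1 h2
      exact (Prod.mk.inj (key_inj L s t σ (le_antisymm h2 h1))).1
    · exact rk_img _ (key_inj L s t σ)
  have hcard : k.factorial = (univ : Finset (Equiv.Perm (Fin k))).card := by
    rw [card_univ, Fintype.card_perm, Fintype.card_fin]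
  rw [hcard, cliqueCount]
  symm
  refine card_bij (fun σ _ => edges (Y σ)) ?_ ?_ ?_
  · intro σ _
    have hM := (hgood σ).matching
    rw [mem_filter]
    refine ⟨?_, hM, hM.2.1, hM.2.2.1, ?_⟩
    · rw [mem_powerset]
      intro e he
      rw [mem_powerset, ← hM.2.2.2]
      exact subset_biUnion_of_mem id he
    · have hlt : ∀ a b, a < b → ∃ R ∈ ({edges p, edges q} : Set (Finset (Finset ℕ))),
          FormsPattern r (univ.image (Y σ a)) (univ.image (Y σ b)) R := by
        intro a b hab
        have hne : ∀ i j, Y σ a i ≠ Y σ b j :=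
          fun i j h => hab.ne ((hgood σ).inj _ _ _ _ h)
        rcases hσne σ hab with h | h
        · refine ⟨edges p, by simp, ?_⟩
          rw [forms_iff hp ((hgood σ).mono a) ((hgood σ).mono b) ((hgood σ).mono0 hab) hne]
          exact fun i j => hYP σ a b i j hab h
        · refine ⟨edges q, by simp, ?_⟩
          rw [forms_iff hq ((hgood σ).mono a) ((hgood σ).mono b) ((hgood σ).mono0 hab) hne]
          exact fun i j => hYQ σ a b i j hab h
      intro e he f hf hne
      rw [mem_edges] at he hf
      obtain ⟨a, rfl⟩ := he
      obtain ⟨b, rfl⟩ := hf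
      have hab : a ≠ b := fun h => hne (by rw [h])
      rcases lt_or_gt_of_ne hab with h | h
      · exact hlt a b h
      · obtain ⟨R, hR, hF⟩ := hlt b a h
        exact ⟨R, hR, forms_symm hF⟩
  · intro σ _ τ _ h
    have hY : Y σ = Y τ := edges_inj (hgood σ).mono0 (hgood τ).mono0 (hgood σ).mono
      (hgood τ).mono h
    have hc : ∀ (σ : Equiv.Perm (Fin k)) a b, σ a < σ b ↔ Y σ a i₀ < Y σ b i₀ := by
      intro σ a b
      show _ ↔ rk _ _ _ < rk _ _ _
      rw [rk_lt, key_lt]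
      simp [pos, h1, h2]
    apply perm_ext
    intro a b
    rw [hc σ, hc τ, hY]
  · intro M hM
    rw [mem_filter] at hM
    obtain ⟨-, hM, -, -, hF⟩ := hM
    obtain ⟨y, hy, rfl⟩ := exists_good hM
    obtain ⟨σ, hσ⟩ := exists_perm (fun a => y a i₀) (fun a b h => hy.inj _ _ _ _ h)
    refine ⟨σ, mem_univ _, ?_⟩
    have hcl : ∀ a b i j, a < b → (key L s t σ (a, i) < key L s t σ (b, j) ↔ y a i < y b j) := by
      intro a b i j hab
      have hne : ∀ i j, y a i ≠ y b j := fun i j h => hab.ne (hy.inj _ _ _ _ h)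
      obtain ⟨R, hR, hF⟩ := hF _ ((mem_edges y _).2 ⟨a, rfl⟩) _ ((mem_edges y _).2 ⟨b, rfl⟩) (by
        intro h
        have : y a 0 ∈ univ.image (y b) := by rw [← h]; simp
        simp only [mem_image, mem_univ, true_and] at this
        obtain ⟨j, hj⟩ := this
        exact hne 0 j hj.symm)
      rcases hR with rfl | rfl
      · rw [forms_iff hp (hy.mono a) (hy.mono b) (hy.mono0 hab) hne] at hF
        have : σ a < σ b := by
          rw [hσ, hF, hs]; exact Or.inr ⟨rfl, h1⟩
        rw [key_lt_P L s t σ hab this, hF, hs]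
      · rw [forms_iff hq (hy.mono a) (hy.mono b) (hy.mono0 hab) hne] at hF
        have : ¬ σ a < σ b := by
          rw [hσ, hF, ht]; simp [h2]
        have := (hσne σ hab).resolve_left this
        rw [key_lt_Q L s t σ hab this, hF, ht]
    have : y = Y σ := by
      apply eq_rk _ (key_inj L s t σ) hy
      intro a b i j h
      rcases lt_trichotomy a b with hab | rfl | hab
      · exact (hcl a b i j hab).1 h
      · exact hy.mono a ((key_mono hL s t σ a i j).1 h)
      · have h3 : ¬ y b j < y a i := by
          rw [← hcl b a j i hab]; exact not_lt.2 h.le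
        have h4 : y b j ≠ y a i := fun h => hab.ne (hy.inj _ _ _ _ h)
        omega
    rw [← this]

end HCC

/-- **Lemma.** For a harmonious pair `{P, Q}` of distinct `r`-patterns, the number of
`{P,Q}`-cliques of size `k` partitioning `[rk]` equals `k!`. -/
theorem harmonious_clique_count (r : ℕ) (hr : 2 ≤ r) (P Q : Finset (Finset ℕ))
    (hP : IsOrderedMatching r 2 P) (hQ : IsOrderedMatching r 2 Q)
    (hPQ : Harmonious r P Q) (k : ℕ) (hk : 1 ≤ k) :
    cliqueCount r {P, Q} k = k.factorial := by
  haveI : NeZero r := ⟨by omega⟩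
  obtain ⟨p, hp, rfl⟩ := HCC.exists_good hP
  obtain ⟨q, hq, rfl⟩ := HCC.exists_good hQ
  obtain ⟨hne, -, -, lam, hcP, hcQ⟩ := hPQ
  obtain ⟨s, hs⟩ := HCC.composition hp hcP
  obtain ⟨t, ht⟩ := HCC.composition hq hcQ
  have hL := HCC.lev_mono lam
  have hex : ∃ i : Fin r, s (HCC.lev lam i) ≠ t (HCC.lev lam i) := by
    by_contra hcon
    push Not at hcon
    apply hne
    have hpq : ∀ i j, p 0 i < p 1 j ↔ q 0 i < q 1 j := by
      intro i j
      rw [hs, ht, hcon]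
    have e1 : p = HCC.rk (fun z => p z.1 z.2) := by
      refine HCC.eq_rk _ ?_ hp (fun a b i j h => h)
      rintro ⟨a, i⟩ ⟨b, j⟩ h
      have h : p a i = p b j := h
      obtain rfl := hp.inj _ _ _ _ h
      rw [(hp.mono a).injective h]
    have e2 : q = HCC.rk (fun z => p z.1 z.2) := by
      refine HCC.eq_rk _ ?_ hq ?_
      · rintro ⟨a, i⟩ ⟨b, j⟩ h
        have h : p a i = p b j := h
        obtain rfl := hp.inj _ _ _ _ h
        rw [(hp.mono a).injective h]
      · intro a b i j h
        have h : p a i < p b j := h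
        rcases lt_trichotomy a b with hab | rfl | hab
        · obtain rfl : a = 0 := by omega
          obtain rfl : b = 1 := by omega
          exact (hpq i j).1 h
        · exact hq.mono a ((hp.mono a).lt_iff_lt.1 h)
        · obtain rfl : a = 1 := by omega
          obtain rfl : b = 0 := by omega
          have h3 : ¬ q 0 j < q 1 i := by
            rw [← hpq]; omega
          have h4 : q 0 j ≠ q 1 i := fun h => absurd (hq.inj _ _ _ _ h) (by decide)
          omega
    rw [e1, ← e2]
  obtain ⟨i, hi⟩ := hex
  cases h1 : s (HCC.lev lam i) with
  | true =>
    have h2 : t (HCC.lev lam i) = false := by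
      cases h : t (HCC.lev lam i) <;> simp_all
    exact HCC.core hp hq hL hs ht i h1 h2 k
  | false =>
    have h2 : t (HCC.lev lam i) = true := by
      cases h : t (HCC.lev lam i) <;> simp_all
    rw [Set.pair_comm]
    exact HCC.core hq hp hL ht hs i h2 h1 k
end
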